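/- Let 1<p<∞ with conjugate exponent q (1/p+1/q=1),5 and let w be a non-increasing positive function on I=(0,a), 0<a≤∞, with W(t)=∫₀ᵗ w dm finite on I. For a measurable function f on I, suppose N(f) := sup{ ∫_I |f·g| dm : g measurable on I, ∫_I (g*)^p w dm ≤ 1 } is finite. Then N(f) = inf{ (∫_I (f*)^q v^{1−q} dm)^{1/q} : v non-increasing, positive on I, with ∫₀ˣ v dm ≤ ∫₀ˣ w dm for all x∈I }; that is, the Köthe dual norm of the classical Lorentz space Λ_{p,w} is given by this infimum over weights v submajorized by w. -/

import Mathlib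

open MeasureTheory Set Filter
open scoped ENNReal

/-- The interval `(0, a)` for `a : ℝ≥0∞` (equals `(0,∞)` when `a = ∞`). -/
def Iset (a : ℝ≥0∞) : Set ℝ := {x : ℝ | 0 < x ∧ ENNReal.ofReal x < a}

/-- Lebesgue measure restricted to the interval `(0,a)`. -/
noncomputable def volI (a : ℝ≥0∞) : Measure ℝ := volume.restrict (Iset a)

/-- Decreasing rearrangement of an `ℝ≥0∞`-valued function with respect to a measure `μ`:
`f^{*,μ}(t) = inf {s > 0 : μ({f > s}) ≤ t}`. -/
noncomputable def rearrE (μ : Measure ℝ) (f : ℝ → ℝ≥0∞) (t : ℝ) : ℝ≥0∞ :=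
  sInf {s : ℝ≥0∞ | 0 < s ∧ μ {x | s < f x} ≤ ENNReal.ofReal t}

/-- Decreasing rearrangement of a real function with respect to a measure `μ` on `ℝ`:
`f^{*,μ}(t) = inf {s > 0 : μ({|f| > s}) ≤ t}`. -/
noncomputable def rearr (μ : Measure ℝ) (f : ℝ → ℝ) (t : ℝ) : ℝ≥0∞ :=
  rearrE μ (fun x => ENNReal.ofReal |f x|) t

/-- The measure `w·dm` on the set `I`. -/
noncomputable def wMeas (I : Set ℝ) (w : ℝ → ℝ) : Measure ℝ :=
  (volume.restrict I).withDensity (fun t => ENNReal.ofReal (w t))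

/-- `W(t) = ∫₀ᵗ w dm`. -/
noncomputable def Wfun (w : ℝ → ℝ) (t : ℝ) : ℝ := ∫ s in Set.Ioo (0:ℝ) t, w s

/-- `b = ∫_I w dm` as an extended real number. -/
noncomputable def bval (a : ℝ≥0∞) (w : ℝ → ℝ) : ℝ≥0∞ := ∫⁻ x in Iset a, ENNReal.ofReal (w x)

/-- The Köthe dual norm of the Lorentz space `Λ_{p,w}`:
`N(f) = sup { ∫_I |f·g| dm : ∫_I (g*)^p w dm ≤ 1 }`. -/
noncomputable def lorentzDualNorm (a : ℝ≥0∞) (w : ℝ → ℝ) (p : ℝ) (f : ℝ → ℝ) : ℝ≥0∞ :=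
  sSup {c : ℝ≥0∞ | ∃ g : ℝ → ℝ, Measurable g ∧
    (∫⁻ t in Iset a, rearr (volI a) g t ^ p * ENNReal.ofReal (w t)) ≤ 1 ∧
    c = ∫⁻ x in Iset a, ENNReal.ofReal |f x * g x|}


theorem vol_Iset (c : ℝ≥0∞) : volume (Iset c) = c := by
  by_cases h : c = ∞
  · subst h
    have : Iset ∞ = Ioi (0:ℝ) := by ext x; simp [Iset]
    rw [this]; simp
  · have : Iset c = Ioo 0 c.toReal := by
      ext x
      simp only [Iset, mem_setOf_eq, mem_Ioo]
      refine and_congr_right fun hx => ?_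
      rw [ENNReal.ofReal_lt_iff_lt_toReal hx.le h]
    rw [this, Real.volume_Ioo, sub_zero, ENNReal.ofReal_toReal h]

theorem meas_Iset (c : ℝ≥0∞) : MeasurableSet (Iset c) :=
  (measurableSet_lt measurable_const measurable_id).inter
    (measurableSet_lt ENNReal.measurable_ofReal measurable_const)

theorem Iset_down {a : ℝ≥0∞} {x y : ℝ} (hy : y ∈ Iset a) (hx : 0 < x) (hxy : x ≤ y) :
    x ∈ Iset a :=
  ⟨hx, lt_of_le_of_lt (ENNReal.ofReal_le_ofReal hxy) hy.2⟩

theorem Ioo_sub_Iset {a : ℝ≥0∞} {y : ℝ} (hy : y ∈ Iset a) : Ioo 0 y ⊆ Iset a :=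
  fun _ hx => Iset_down hy hx.1 hx.2.le

theorem layer1 (μ : Measure ℝ) [SFinite μ] {k : ℝ → ℝ≥0∞} (hk : Measurable k) :
    ∫⁻ x, k x ∂μ = ∫⁻ s in Ioi (0:ℝ), μ {x | ENNReal.ofReal s < k x} := by
  have hm : MeasurableSet {z : ℝ × ℝ | ENNReal.ofReal z.2 < k z.1} :=
    measurableSet_lt (ENNReal.measurable_ofReal.comp measurable_snd) (hk.comp measurable_fst)
  have h1 : ∀ x, k x = ∫⁻ s in Ioi (0:ℝ),
      ({z : ℝ × ℝ | ENNReal.ofReal z.2 < k z.1}).indicator (fun _ => 1) (x, s) := by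
    intro x
    have : (fun s : ℝ => ({z : ℝ × ℝ | ENNReal.ofReal z.2 < k z.1}).indicator
        (fun _ => (1:ℝ≥0∞)) (x, s)) = ({s : ℝ | ENNReal.ofReal s < k x}).indicator 1 := by
      ext s; simp [indicator]
    have hms : MeasurableSet {s : ℝ | ENNReal.ofReal s < k x} :=
      measurableSet_lt ENNReal.measurable_ofReal measurable_const
    rw [this, lintegral_indicator_one hms, Measure.restrict_apply hms]
    conv_lhs => rw [← vol_Iset (k x)]
    congr 1
    ext s; simp [Iset, and_comm]
  rw [lintegral_congr h1, lintegral_lintegral_swap]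
  · refine lintegral_congr fun s => ?_
    have : (fun x : ℝ => ({z : ℝ × ℝ | ENNReal.ofReal z.2 < k z.1}).indicator
        (fun _ => (1:ℝ≥0∞)) (x, s)) = ({x : ℝ | ENNReal.ofReal s < k x}).indicator 1 := by
      ext x; simp [indicator]
    rw [this, lintegral_indicator_one (measurableSet_lt measurable_const hk)]
  · exact (measurable_const.indicator hm).aemeasurable

theorem layer2 (μ : Measure ℝ) [SFinite μ] {F G : ℝ → ℝ≥0∞} (hF : Measurable F)
    (hG : Measurable G) :
    ∫⁻ x, F x * G x ∂μ = ∫⁻ s in Ioi (0:ℝ), ∫⁻ r in Ioi (0:ℝ),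
      μ {x | ENNReal.ofReal s < F x ∧ ENNReal.ofReal r < G x} := by
  have h1 : ∫⁻ x, F x * G x ∂μ = ∫⁻ x, F x ∂(μ.withDensity G) := by
    rw [lintegral_withDensity_eq_lintegral_mul _ hG hF]
    simp [mul_comm]
  rw [h1, layer1 _ hF]
  refine lintegral_congr fun s => ?_
  have hms : MeasurableSet {x | ENNReal.ofReal s < F x} := measurableSet_lt measurable_const hF
  rw [withDensity_apply _ hms, layer1 _ hG]
  refine lintegral_congr fun r => ?_
  rw [Measure.restrict_apply (measurableSet_lt measurable_const hG)]
  congr 1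
  ext x; simp [and_comm]

theorem rearrE_anti (μ : Measure ℝ) (F : ℝ → ℝ≥0∞) : Antitone (rearrE μ F) := by
  intro t t' h
  refine sInf_le_sInf ?_
  rintro s ⟨hs, h2⟩
  exact ⟨hs, h2.trans (ENNReal.ofReal_le_ofReal h)⟩

theorem le_rearrE {μ : Measure ℝ} {F : ℝ → ℝ≥0∞} {t : ℝ} {c : ℝ≥0∞}
    (h : ENNReal.ofReal t < μ {x | c < F x}) : c ≤ rearrE μ F t := by
  refine le_sInf ?_
  rintro s ⟨_, h2⟩
  by_contra hc
  push Not at hc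
  exact absurd (lt_of_lt_of_le h ((measure_mono (fun x hx => lt_trans hc hx)).trans h2)) (lt_irrefl _)

theorem rearrE_le {μ : Measure ℝ} {F : ℝ → ℝ≥0∞} {t : ℝ} {c : ℝ≥0∞}
    (h : μ {x | c < F x} ≤ ENNReal.ofReal t) : rearrE μ F t ≤ c := by
  refine le_of_forall_gt_imp_ge_of_dense fun s hs => ?_
  exact sInf_le ⟨lt_of_le_of_lt bot_le hs, (measure_mono (fun x hx => lt_trans hs hx)).trans h⟩

theorem lt_meas_of_lt_rearrE {μ : Measure ℝ} {F : ℝ → ℝ≥0∞} {t : ℝ} {c : ℝ≥0∞}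
    (h : c < rearrE μ F t) : ENNReal.ofReal t < μ {x | c < F x} := by
  by_contra hc
  push Not at hc
  exact absurd (rearrE_le hc) (not_le.2 h)

theorem lt_rearrE {μ : Measure ℝ} {F : ℝ → ℝ≥0∞} {t : ℝ} {c : ℝ≥0∞}
    (h : ENNReal.ofReal t < μ {x | c < F x}) : c < rearrE μ F t := by
  by_cases hc : c = ∞
  · subst hc; simp at h
  obtain ⟨u, hu, hu1, hu2⟩ := exists_seq_strictAnti_tendsto' (lt_top_iff_ne_top.2 hc)
  have hU : {x | c < F x} = ⋃ n, {x | u n < F x} := by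
    ext x
    simp only [mem_setOf_eq, mem_iUnion]
    constructor
    · intro hx
      exact ((hu2.eventually (gt_mem_nhds hx))).exists
    · rintro ⟨n, hn⟩
      exact lt_trans (hu1 n).1 hn
  have hmono : Monotone fun n => {x | u n < F x} := by
    intro m n hmn x hx
    exact lt_of_le_of_lt (hu.antitone hmn) hx
  rw [hU, hmono.measure_iUnion, lt_iSup_iff] at h
  obtain ⟨n, hn⟩ := h
  exact lt_of_lt_of_le (hu1 n).1 (le_rearrE hn)

theorem rearrE_rc {μ : Measure ℝ} {F : ℝ → ℝ≥0∞} {t : ℝ} {c : ℝ≥0∞} (ht : 0 ≤ t)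
    (h : c < rearrE μ F t) : ∃ t' > t, c < rearrE μ F t' := by
  have h1 := lt_meas_of_lt_rearrE h
  obtain ⟨m, hm1, hm2⟩ := exists_between h1
  have hmf : m ≠ ∞ := ne_top_of_lt hm2
  refine ⟨m.toReal, (ENNReal.ofReal_lt_iff_lt_toReal ht hmf).1 hm1, lt_rearrE ?_⟩
  · rwa [ENNReal.ofReal_toReal hmf]

theorem hardyLittlewood (a : ℝ≥0∞) {F G : ℝ → ℝ≥0∞} (hF : Measurable F) (hG : Measurable G) :
    ∫⁻ x in Iset a, F x * G x ≤ ∫⁻ t in Iset a, rearrE (volI a) F t * rearrE (volI a) G t := by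
  rw [layer2 _ hF hG, layer2 _ (rearrE_anti _ F).measurable (rearrE_anti _ G).measurable]
  refine lintegral_mono fun s => lintegral_mono fun r => ?_
  have hmF : (volI a) {x | ENNReal.ofReal s < F x} ≤ a := by
    refine (measure_mono (subset_univ _)).trans ?_
    simp [volI, vol_Iset]
  calc volume.restrict (Iset a) {x | ENNReal.ofReal s < F x ∧ ENNReal.ofReal r < G x}
      ≤ min (volI a {x | ENNReal.ofReal s < F x}) (volI a {x | ENNReal.ofReal r < G x}) :=
        le_min (measure_mono fun x hx => hx.1) (measure_mono fun x hx => hx.2)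
    _ = volume (Iset (min (volI a {x | ENNReal.ofReal s < F x})
          (volI a {x | ENNReal.ofReal r < G x}))) := (vol_Iset _).symm
    _ ≤ _ := by
        rw [Measure.restrict_apply' (meas_Iset a)]
        refine measure_mono fun x hx => ?_
        have h1 := lt_min_iff.1 hx.2
        exact ⟨⟨lt_rearrE h1.1, lt_rearrE h1.2⟩, hx.1, lt_of_lt_of_le h1.1 hmF⟩

/-- Initial segments of `(0,∞)`. -/
def InitSeg (S : Set ℝ) : Prop := (∀ t ∈ S, 0 < t) ∧ ∀ u ∈ S, ∀ t, 0 < t → t ≤ u → t ∈ S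

theorem InitSeg.meas {S : Set ℝ} (hS : InitSeg S) : MeasurableSet S := by
  have : OrdConnected S := ⟨fun x hx y hy z hz => hS.2 y hy z (lt_of_lt_of_le (hS.1 x hx) hz.1) hz.2⟩
  exact this.measurableSet

theorem InitSeg.measure_le {S : Set ℝ} (hS : InitSeg S) {μ : Measure ℝ} (hμ : μ ≪ volume)
    {c : ℝ≥0∞} (h : ∀ x ∈ S, μ (Ioo 0 x) ≤ c) : μ S ≤ c := by
  set T : Set ℝ := ⋃ x : {x : ℚ // (x:ℝ) ∈ S}, Ioo (0:ℝ) (x.1:ℝ) with hT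
  have hTS : volume (S \ T) = 0 := by
    refine Set.Subsingleton.measure_zero ?_ _
    have key : ∀ u ∈ S, ∀ u' ∈ S, u < u' → u ∈ T := by
      intro u hu u' hu' huu
      obtain ⟨x, hx1, hx2⟩ := exists_rat_btwn huu
      have h0 := hS.1 u hu
      exact mem_iUnion.2 ⟨⟨x, hS.2 u' hu' x (h0.trans hx1) hx2.le⟩, h0, hx1⟩
    intro u hu u' hu'
    rcases lt_trichotomy u u' with h1 | h1 | h1
    · exact absurd (key u hu.1 u' hu'.1 h1) hu.2
    · exact h1
    · exact absurd (key u' hu'.1 u hu.1 h1) hu'.2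
  have h1 : μ S ≤ μ T + μ (S \ T) := by
    refine (measure_mono ?_).trans (measure_union_le _ _)
    intro x hx
    by_cases hxT : x ∈ T
    · exact Or.inl hxT
    · exact Or.inr ⟨hx, hxT⟩
  rw [hμ hTS, add_zero] at h1
  refine h1.trans ?_
  rw [hT, Directed.measure_iUnion]
  · exact iSup_le fun x => h x x.2
  · refine Monotone.directed_le ?_
    intro x y hxy t ht
    exact ⟨ht.1, lt_of_lt_of_le ht.2 (by exact_mod_cast hxy)⟩

theorem wMeas_ac (I : Set ℝ) (w : ℝ → ℝ) : wMeas I w ≪ volume :=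
  (withDensity_absolutelyContinuous _ _).trans Measure.restrict_le_self.absolutelyContinuous

theorem wMeas_apply (I : Set ℝ) (w : ℝ → ℝ) {S : Set ℝ} (hS : MeasurableSet S) (hSI : S ⊆ I) :
    wMeas I w S = ∫⁻ t in S, ENNReal.ofReal (w t) := by
  rw [wMeas, withDensity_apply _ hS, Measure.restrict_restrict hS, inter_eq_left.2 hSI]

theorem lintegral_wMeas (I : Set ℝ) {w : ℝ → ℝ} (hw : AEMeasurable w (volume.restrict I))
    {k : ℝ → ℝ≥0∞} (hk : Measurable k) :
    ∫⁻ t, k t ∂(wMeas I w) = ∫⁻ t in I, k t * ENNReal.ofReal (w t) := by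
  rw [wMeas, lintegral_withDensity_eq_lintegral_mul₀ hw.ennreal_ofReal hk.aemeasurable]
  simp [mul_comm]

theorem hardy_lemma (a : ℝ≥0∞) {v w : ℝ → ℝ} (hv : AEMeasurable v (volI a))
    (hw : AEMeasurable w (volI a))
    (h : ∀ x ∈ Iset a, ∫⁻ t in Set.Ioo 0 x, ENNReal.ofReal (v t)
              ≤ ∫⁻ t in Set.Ioo 0 x, ENNReal.ofReal (w t))
    {k : ℝ → ℝ≥0∞} (hk : Antitone k) :
    ∫⁻ t in Iset a, k t * ENNReal.ofReal (v t) ≤ ∫⁻ t in Iset a, k t * ENNReal.ofReal (w t) := by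
  rw [← lintegral_wMeas _ hv hk.measurable, ← lintegral_wMeas _ hw hk.measurable]
  haveI : SFinite (wMeas (Iset a) v) := by unfold wMeas; infer_instance
  haveI : SFinite (wMeas (Iset a) w) := by unfold wMeas; infer_instance
  rw [layer1 _ hk.measurable, layer1 _ hk.measurable]
  refine lintegral_mono fun s => ?_
  set S := {x | ENNReal.ofReal s < k x} ∩ Iset a with hS
  have hSi : InitSeg S := ⟨fun t ht => ht.2.1, fun u hu t ht htu =>
    ⟨lt_of_lt_of_le hu.1 (hk htu), Iset_down hu.2 ht htu⟩⟩
  have hz : ∀ v : ℝ → ℝ, wMeas (Iset a) v {x | ENNReal.ofReal s < k x} = wMeas (Iset a) v S := by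
    intro v
    have hm : MeasurableSet {x | ENNReal.ofReal s < k x} :=
      measurableSet_lt measurable_const hk.measurable
    rw [wMeas, withDensity_apply _ hm, withDensity_apply _ hSi.meas,
      Measure.restrict_restrict hm, Measure.restrict_restrict hSi.meas, hS, inter_assoc, inter_self]
  rw [hz, hz]
  refine hSi.measure_le (wMeas_ac _ _) fun x hx => ?_
  refine le_trans ?_ (measure_mono (μ := wMeas (Iset a) w) (s := Ioo 0 x) fun t ht => hSi.2 x hx t ht.1 ht.2.le)
  rw [wMeas_apply _ _ measurableSet_Ioo (Ioo_sub_Iset hx.2),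
    wMeas_apply _ _ measurableSet_Ioo (Ioo_sub_Iset hx.2)]
  exact h x hx.2

theorem upper_dir (a : ℝ≥0∞) {v w : ℝ → ℝ} (hvpos : ∀ t ∈ Iset a, 0 < v t)
    (hv : AEMeasurable v (volI a)) (hw : AEMeasurable w (volI a))
    (h : ∀ x ∈ Iset a, ∫⁻ t in Set.Ioo 0 x, ENNReal.ofReal (v t)
              ≤ ∫⁻ t in Set.Ioo 0 x, ENNReal.ofReal (w t))
    {p q : ℝ} (hpq : p.HolderConjugate q) {f g : ℝ → ℝ} (hf : Measurable f) (hg : Measurable g)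
    (hg1 : (∫⁻ t in Iset a, rearr (volI a) g t ^ p * ENNReal.ofReal (w t)) ≤ 1) :
    ∫⁻ x in Iset a, ENNReal.ofReal |f x * g x| ≤
      (∫⁻ t in Iset a, rearr (volI a) f t ^ q * ENNReal.ofReal (v t) ^ (1 - q)) ^ (1/q) := by
  have hfm : Measurable (rearr (volI a) f) := (rearrE_anti _ _).measurable
  have hgm : Measurable (rearr (volI a) g) := (rearrE_anti _ _).measurable
  have hganti : Antitone fun t => rearr (volI a) g t ^ p := fun s t hst =>
    ENNReal.rpow_le_rpow (rearrE_anti _ _ hst) hpq.nonneg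
  have hvo : AEMeasurable (fun t => ENNReal.ofReal (v t)) (volume.restrict (Iset a)) :=
    hv.ennreal_ofReal
  calc ∫⁻ x in Iset a, ENNReal.ofReal |f x * g x|
      = ∫⁻ x in Iset a, ENNReal.ofReal |f x| * ENNReal.ofReal |g x| := by
        simp_rw [abs_mul, ENNReal.ofReal_mul (abs_nonneg _)]
    _ ≤ ∫⁻ t in Iset a, rearr (volI a) f t * rearr (volI a) g t :=
        hardyLittlewood a hf.abs.ennreal_ofReal hg.abs.ennreal_ofReal
    _ = ∫⁻ t in Iset a, ((fun t => rearr (volI a) f t * ENNReal.ofReal (v t) ^ (-(1/p))) *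
          (fun t => rearr (volI a) g t * ENNReal.ofReal (v t) ^ (1/p))) t := by
        refine setLIntegral_congr_fun (meas_Iset a) fun t ht => ?_
        have h0 : ENNReal.ofReal (v t) ≠ 0 := by simpa using hvpos t ht
        have : ENNReal.ofReal (v t) ^ (-(1/p)) * ENNReal.ofReal (v t) ^ (1/p) = 1 := by
          rw [← ENNReal.rpow_add _ _ h0 ENNReal.ofReal_ne_top]; simp
        simp only [Pi.mul_apply]
        rw [mul_mul_mul_comm, this, mul_one]
    _ ≤ (∫⁻ t in Iset a, (rearr (volI a) f t * ENNReal.ofReal (v t) ^ (-(1/p))) ^ q) ^ (1/q) *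
        (∫⁻ t in Iset a, (rearr (volI a) g t * ENNReal.ofReal (v t) ^ (1/p)) ^ p) ^ (1/p) :=
        ENNReal.lintegral_mul_le_Lp_mul_Lq _ hpq.symm
          (hfm.aemeasurable.mul (hvo.pow_const _)) (hgm.aemeasurable.mul (hvo.pow_const _))
    _ ≤ (∫⁻ t in Iset a, rearr (volI a) f t ^ q * ENNReal.ofReal (v t) ^ (1 - q)) ^ (1/q) * 1 := by
        refine mul_le_mul' (le_of_eq ?_) ?_
        · congr 1
          refine lintegral_congr fun t => ?_
          rw [ENNReal.mul_rpow_of_nonneg _ _ hpq.symm.nonneg, ← ENNReal.rpow_mul]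
          congr 2
          have h1 := hpq.symm.sub_one_mul_conj
          have h2 := hpq.pos.ne'
          field_simp
          linarith
        · refine ENNReal.rpow_le_one ?_ (by have := hpq.pos; positivity)
          refine le_trans ?_ hg1
          refine le_trans (le_of_eq ?_) (hardy_lemma a hv hw h hganti)
          refine lintegral_congr fun t => ?_
          rw [ENNReal.mul_rpow_of_nonneg _ _ hpq.nonneg, ← ENNReal.rpow_mul]
          rw [one_div_mul_cancel hpq.ne_zero, ENNReal.rpow_one]
    _ = _ := mul_one _

theorem volI_fin {b : ℝ≥0∞} (hb : b ≠ ∞) : IsFiniteMeasure (volI b) :=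
  ⟨by simpa [volI, vol_Iset] using hb.lt_top⟩

theorem exists_upset {b : ℝ≥0∞} (hb : b ≠ ∞) {G : ℝ → ℝ≥0∞} (hG : Measurable G)
    (hGf : ∀ x, G x ≠ ∞) {t : ℝ} (ht0 : 0 ≤ t) (ht : ENNReal.ofReal t ≤ b) :
    ∃ E : Set ℝ, MeasurableSet E ∧ volI b E = ENNReal.ofReal t ∧
      ∀ x ∈ E, ∀ y, (G x < G y ∨ (G x = G y ∧ y < x)) → y ∈ E := by
  have hfin := volI_fin hb
  rcases ht0.eq_or_lt with h0 | h0
  · subst h0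
    exact ⟨∅, MeasurableSet.empty, by simp, by simp⟩
  set c := rearrE (volI b) G t with hc
  have h1 : volI b {x | c < G x} ≤ ENNReal.ofReal t := by
    by_contra hcon
    push Not at hcon
    exact lt_irrefl _ (lt_rearrE hcon)
  have h2 : ENNReal.ofReal t ≤ volI b {x | c ≤ G x} := by
    rcases eq_or_ne c 0 with hc0 | hc0
    · rw [hc0]; simpa [volI, vol_Iset] using ht
    · obtain ⟨u, hu, hu1, hu2⟩ := exists_seq_strictMono_tendsto' (pos_iff_ne_zero.2 hc0)
      have hU : {x | c ≤ G x} = ⋂ n, {x | u n < G x} := by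
        ext x
        simp only [mem_ofPred_eq, mem_iInter]
        constructor
        · intro hx n
          exact lt_of_lt_of_le (hu1 n).2 hx
        · intro hx
          exact le_of_tendsto' hu2 fun n => (hx n).le
      have hanti : Antitone fun n => {x | u n < G x} := by
        intro m n hmn x hx
        exact lt_of_le_of_lt (hu.monotone hmn) hx
      rw [hU, hanti.measure_iInter (fun n => (measurableSet_lt measurable_const hG).nullMeasurableSet)
        ⟨0, measure_ne_top _ _⟩]
      exact le_iInf fun n => (lt_meas_of_lt_rearrE (hu1 n).2).le
  have hS : MeasurableSet {x | G x = c} := measurableSet_eq_fun hG measurable_const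
  have hS1 : MeasurableSet {x | c < G x} := measurableSet_lt measurable_const hG
  set θ : ℝ → ℝ := fun r => (volI b ({x | G x = c} ∩ Iio r)).toReal with hθ
  have hθc : Continuous θ := by
    refine (LipschitzWith.of_le_add (f := θ) fun x y => ?_).continuous
    have : volI b ({x | G x = c} ∩ Iio x) ≤ volI b ({x | G x = c} ∩ Iio y) + ENNReal.ofReal (dist x y) := by
      have hsub : {x | G x = c} ∩ Iio x ⊆ ({x | G x = c} ∩ Iio y) ∪ Ico y x := by
        rintro z ⟨hz1, hz2⟩
        by_cases hz : z < y
        · exact Or.inl ⟨hz1, hz⟩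
        · exact Or.inr ⟨not_lt.1 hz, hz2⟩
      refine (measure_mono hsub).trans ((measure_union_le _ _).trans ?_)
      gcongr
      refine (Measure.restrict_apply_le _ _).trans ?_
      rw [Real.volume_Ico]
      exact ENNReal.ofReal_le_ofReal (le_abs_self _)
    have h3 := ENNReal.toReal_mono (by finiteness) this
    rwa [ENNReal.toReal_add (by finiteness) (by finiteness), ENNReal.toReal_ofReal dist_nonneg] at h3
  have hM : 0 ≤ b.toReal := ENNReal.toReal_nonneg
  have hI : Iset b ⊆ Ioo 0 b.toReal := fun x hx =>
    ⟨hx.1, (ENNReal.ofReal_lt_iff_lt_toReal hx.1.le hb).1 hx.2⟩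
  have hθ0 : θ 0 = 0 := by
    have : volI b ({x | G x = c} ∩ Iio 0) = 0 := by
      rw [volI, Measure.restrict_apply' (meas_Iset b)]
      convert measure_empty (μ := volume)
      ext x
      simp only [mem_inter_iff, mem_Iio, mem_empty_iff_false, iff_false]
      rintro ⟨⟨_, h⟩, h'⟩
      exact lt_asymm h h'.1
    simp [hθ, this]
  have hθM : θ b.toReal = (volI b {x | G x = c}).toReal := by
    simp only [hθ]
    congr 1
    rw [volI, Measure.restrict_apply' (meas_Iset b), Measure.restrict_apply' (meas_Iset b)]
    congr 1
    ext x
    simp only [mem_inter_iff, mem_Iio]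
    constructor
    · rintro ⟨⟨h, _⟩, h'⟩; exact ⟨h, h'⟩
    · rintro ⟨h, h'⟩; exact ⟨⟨h, (hI h').2⟩, h'⟩
  have h3 : volI b {x | c ≤ G x} = volI b {x | c < G x} + volI b {x | G x = c} := by
    rw [← measure_union _ hS]
    · congr 1
      ext x
      simp only [mem_ofPred_eq, mem_union, le_iff_lt_or_eq]
      tauto
    · refine Set.disjoint_left.2 fun x hx hx' => ?_
      exact absurd (hx' : G x = c) (ne_of_gt hx)
  have hτ : t - (volI b {x | c < G x}).toReal ∈ Icc (θ 0) (θ b.toReal) := by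
    rw [hθ0, hθM]
    have e1 := ENNReal.toReal_mono (by finiteness) h1
    have e2 := ENNReal.toReal_mono (by finiteness) h2
    rw [ENNReal.toReal_ofReal ht0] at e1 e2
    rw [h3, ENNReal.toReal_add (by finiteness) (by finiteness)] at e2
    constructor <;> linarith
  obtain ⟨r, _, hr⟩ := intermediate_value_Icc hM hθc.continuousOn hτ
  refine ⟨{x | c < G x} ∪ ({x | G x = c} ∩ Iio r), hS1.union (hS.inter measurableSet_Iio), ?_, ?_⟩
  · rw [measure_union _ (hS.inter measurableSet_Iio)]
    · rw [← ENNReal.ofReal_toReal (a := volI b {x | c < G x}) (by finiteness),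
        ← ENNReal.ofReal_toReal (a := volI b ({x | G x = c} ∩ Iio r)) (by finiteness),
        ← ENNReal.ofReal_add ENNReal.toReal_nonneg ENNReal.toReal_nonneg]
      congr 1
      change _ + θ r = t
      rw [hr]; ring
    · refine Set.disjoint_left.2 fun x hx hx' => ?_
      exact absurd (hx'.1 : G x = c) (ne_of_gt hx)
  · rintro x (hx | ⟨hx, hxr⟩) y (hy | ⟨hy, hyx⟩)
    · exact Or.inl (lt_trans hx hy)
    · exact Or.inl (by rw [mem_ofPred_eq, ← hy]; exact hx)
    · refine Or.inl ?_
      rw [mem_ofPred_eq] at hx ⊢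
      rwa [← hx]
    · refine Or.inr ⟨?_, lt_trans hyx hxr⟩
      rw [mem_ofPred_eq] at hx ⊢
      rw [← hy, hx]

theorem exists_sigma {b : ℝ≥0∞} (hb : b ≠ ∞) {G : ℝ → ℝ≥0∞} (hG : Measurable G)
    (hGf : ∀ x, G x ≠ ∞) :
    ∃ σ : ℝ → ℝ, Measurable σ ∧ (volI b).map σ = volI b ∧
      ∀ x, volI b {y | G x < G y} ≤ ENNReal.ofReal (σ x) := by
  have hfin := volI_fin hb
  set U : ℝ → Set ℝ := fun x => {y | G x < G y ∨ (G x = G y ∧ y < x)} with hU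
  set σ : ℝ → ℝ := fun x => (volI b (U x)).toReal with hσ
  have hσo : ∀ x, ENNReal.ofReal (σ x) = volI b (U x) := fun x =>
    ENNReal.ofReal_toReal (measure_ne_top _ _)
  have huniv : volI b univ = b := by simp [volI, vol_Iset]
  choose! E hEm hEt hEu using fun (t : ℝ) (h : 0 ≤ t ∧ ENNReal.ofReal t ≤ b) =>
    exists_upset hb hG hGf h.1 h.2
  have hE1 : ∀ t, 0 ≤ t ∧ ENNReal.ofReal t ≤ b → ∀ x ∈ E t, σ x ≤ t := by
    intro t ht x hx
    rw [← ENNReal.ofReal_le_ofReal_iff ht.1, hσo, ← hEt t ht]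
    exact measure_mono fun y hy => hEu t ht x hx y hy
  have hE2 : ∀ t, 0 ≤ t ∧ ENNReal.ofReal t ≤ b → ∀ x, σ x < t → x ∈ E t := by
    intro t ht x hx
    by_contra hxE
    rw [← ENNReal.ofReal_lt_ofReal_iff (lt_of_le_of_lt ENNReal.toReal_nonneg hx), hσo,
      ← hEt t ht] at hx
    refine absurd hx (not_lt.2 ?_)
    refine measure_mono fun y hy => ?_
    rcases lt_trichotomy (G x) (G y) with h | h | h
    · exact Or.inl h
    · rcases lt_trichotomy x y with h' | h' | h'
      · exact absurd (hEu t ht y hy x (Or.inr ⟨h.symm, h'⟩)) hxE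
      · subst h'; exact absurd hy hxE
      · exact Or.inr ⟨h, h'⟩
    · exact absurd (hEu t ht y hy x (Or.inl h)) hxE
  have hσ0 : ∀ x, 0 ≤ σ x := fun x => ENNReal.toReal_nonneg
  have hσM : ∀ x, σ x ≤ b.toReal := fun x =>
    ENNReal.toReal_mono hb ((measure_mono (subset_univ _)).trans huniv.le)
  have hmeas : Measurable σ := by
    refine measurable_of_Iio fun t => ?_
    by_cases htM : b.toReal < t
    · have : σ ⁻¹' Iio t = univ := by
        ext x; simpa using lt_of_le_of_lt (hσM x) htM
      rw [this]; exact MeasurableSet.univ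
    push Not at htM
    have : σ ⁻¹' Iio t = ⋃ x : {x : ℚ // (0:ℝ) ≤ x ∧ (x:ℝ) < t}, E (x.1 : ℝ) := by
      ext x
      simp only [mem_preimage, mem_Iio, mem_iUnion]
      constructor
      · intro hx
        obtain ⟨z, hz1, hz2⟩ := exists_rat_btwn hx
        have hz0 : (0:ℝ) ≤ z := (hσ0 x).trans hz1.le
        exact ⟨⟨z, hz0, hz2⟩, hE2 z ⟨hz0, (ENNReal.ofReal_le_iff_le_toReal hb).2 (hz2.le.trans htM)⟩ x hz1⟩
      · rintro ⟨⟨z, hz0, hz2⟩, hx⟩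
        exact lt_of_le_of_lt (hE1 z ⟨hz0, (ENNReal.ofReal_le_iff_le_toReal hb).2 (hz2.le.trans htM)⟩ x hx) hz2
    rw [this]
    refine MeasurableSet.iUnion fun z => hEm _ ⟨z.2.1, (ENNReal.ofReal_le_iff_le_toReal hb).2 (z.2.2.le.trans htM)⟩
  refine ⟨σ, hmeas, ?_, ?_⟩
  · refine Measure.ext_of_Iic _ _ fun t => ?_
    rw [Measure.map_apply hmeas measurableSet_Iic]
    rcases lt_or_ge t 0 with ht | ht
    · have e1 : σ ⁻¹' Iic t = ∅ := by
        ext x; simpa using lt_of_lt_of_le ht (hσ0 x)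
      have e2 : volI b (Iic t) = 0 := by
        rw [volI, Measure.restrict_apply measurableSet_Iic]
        convert measure_empty (μ := volume)
        ext x
        simp only [mem_inter_iff, mem_Iic, mem_empty_iff_false, iff_false]
        rintro ⟨h, h'⟩
        linarith [h'.1]
      rw [e1, e2, measure_empty]
    rcases le_or_gt b.toReal t with htM | htM
    · have e1 : σ ⁻¹' Iic t = univ := by
        ext x; simpa using (hσM x).trans htM
      have e2 : volI b (Iic t) = volI b univ := by
        rw [volI, Measure.restrict_apply measurableSet_Iic, Measure.restrict_apply MeasurableSet.univ]
        congr 1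
        ext x
        simp only [mem_inter_iff, mem_Iic, mem_univ, true_and, and_iff_right_iff_imp]
        intro h
        exact ((ENNReal.ofReal_lt_iff_lt_toReal h.1.le hb).1 h.2).le.trans htM
      rw [e1, e2]
    · have e2 : volI b (Iic t) = ENNReal.ofReal t := by
        rw [volI, Measure.restrict_apply measurableSet_Iic]
        have : Iic t ∩ Iset b = Ioc 0 t := by
          ext x
          simp only [mem_inter_iff, mem_Iic, mem_Ioc, Iset, mem_ofPred_eq]
          constructor
          · rintro ⟨h1, h2, _⟩; exact ⟨h2, h1⟩
          · rintro ⟨h1, h2⟩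
            exact ⟨h2, h1, (ENNReal.ofReal_lt_iff_lt_toReal h1.le hb).2 (lt_of_le_of_lt h2 htM)⟩
        rw [this, Real.volume_Ioc, sub_zero]
      rw [e2]
      have hle : ∀ t', t' ≤ b.toReal → ENNReal.ofReal t' ≤ b := fun t' h =>
        (ENNReal.ofReal_le_iff_le_toReal hb).2 h
      refine le_antisymm ?_ ?_
      · refine le_of_forall_gt_imp_ge_of_dense fun c hc => ?_
        rcases lt_or_ge c b with hcb | hcb
        · have hcf : c ≠ ∞ := hcb.ne_top
          have hct := (ENNReal.ofReal_lt_iff_lt_toReal ht hcf).1 hc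
          have hcond : 0 ≤ c.toReal ∧ ENNReal.ofReal c.toReal ≤ b :=
            ⟨ENNReal.toReal_nonneg, by rw [ENNReal.ofReal_toReal hcf]; exact hcb.le⟩
          rw [← ENNReal.ofReal_toReal hcf, ← hEt _ hcond]
          exact measure_mono fun x hx => hE2 _ hcond x (lt_of_le_of_lt hx hct)
        · exact (measure_mono (subset_univ _)).trans (huniv.le.trans hcb)
      · rw [← hEt t ⟨ht, hle t htM.le⟩]
        exact measure_mono fun x hx => hE1 t ⟨ht, hle t htM.le⟩ x hx
  · intro x
    rw [hσo]
    exact measure_mono fun y hy => Or.inl hy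

theorem lower_piece {a b : ℝ≥0∞} (hb : b ≠ ∞) (hba : b ≤ a) {w : ℝ → ℝ} {p : ℝ} (hp : 0 ≤ p)
    {f : ℝ → ℝ} (hf : Measurable f) {h : ℝ → ℝ} (hh : Measurable h)
    (hanti : AntitoneOn h (Iset a)) (hnn : ∀ t ∈ Iset a, 0 ≤ h t)
    (h1 : ∫⁻ t in Iset a, ENNReal.ofReal (h t) ^ p * ENNReal.ofReal (w t) ≤ 1) :
    ∫⁻ t in Iset b, rearrE (volI b) (fun x => ENNReal.ofReal |f x|) t * ENNReal.ofReal (h t)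
      ≤ lorentzDualNorm a w p f := by
  obtain ⟨σ, hσm, hσ1, hσ2⟩ := exists_sigma hb (G := fun x => ENNReal.ofReal |f x|)
    hf.abs.ennreal_ofReal (fun x => ENNReal.ofReal_ne_top)
  have hsub : Iset b ⊆ Iset a := fun x hx => ⟨hx.1, lt_of_lt_of_le hx.2 hba⟩
  set g : ℝ → ℝ := (Iset b).indicator (h ∘ σ) with hg
  have hgm : Measurable g := (hh.comp hσm).indicator (meas_Iset b)
  have hg1 : ∀ t ∈ Iset a, rearr (volI a) g t ≤ ENNReal.ofReal (h t) := by
    intro t ht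
    refine rearrE_le ?_
    have e1 : {x | ENNReal.ofReal (h t) < ENNReal.ofReal |g x|} ⊆
        Iset b ∩ σ ⁻¹' {s | ENNReal.ofReal (h t) < ENNReal.ofReal |h s|} := by
      intro x hx
      by_cases hxb : x ∈ Iset b
      · refine ⟨hxb, ?_⟩
        simpa [hg, indicator_of_mem hxb] using hx
      · simp [hg, indicator_of_notMem hxb] at hx
    have hms : MeasurableSet {s | ENNReal.ofReal (h t) < ENNReal.ofReal |h s|} :=
      measurableSet_lt measurable_const hh.abs.ennreal_ofReal
    calc volI a {x | ENNReal.ofReal (h t) < ENNReal.ofReal |g x|}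
        ≤ volume (Iset b ∩ σ ⁻¹' {s | ENNReal.ofReal (h t) < ENNReal.ofReal |h s|}) :=
          (Measure.restrict_apply_le _ _).trans (measure_mono e1)
      _ = volI b (σ ⁻¹' {s | ENNReal.ofReal (h t) < ENNReal.ofReal |h s|}) := by
          rw [volI, Measure.restrict_apply' (meas_Iset b), inter_comm]
      _ = volI b {s | ENNReal.ofReal (h t) < ENNReal.ofReal |h s|} := by
          rw [← Measure.map_apply hσm hms, hσ1]
      _ ≤ volume (Ioo 0 t) := by
          rw [volI, Measure.restrict_apply' (meas_Iset b)]
          refine measure_mono ?_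
          rintro s ⟨hs, hsb⟩
          refine ⟨hsb.1, ?_⟩
          by_contra hst
          push Not at hst
          have := hanti ht (hsub hsb) hst
          rw [mem_ofPred_eq, abs_of_nonneg (hnn s (hsub hsb))] at hs
          exact absurd hs (not_lt.2 (ENNReal.ofReal_le_ofReal this))
      _ = ENNReal.ofReal t := by simp
  have hmem : (∫⁻ x in Iset a, ENNReal.ofReal |f x * g x|) ≤ lorentzDualNorm a w p f := by
    refine le_sSup ⟨g, hgm, le_trans ?_ h1, rfl⟩
    refine setLIntegral_mono' (meas_Iset a) fun t ht => ?_
    gcongr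
    exact hg1 t ht
  refine le_trans ?_ hmem
  set φ := rearrE (volI b) (fun x => ENNReal.ofReal |f x|) with hφ
  have hφm : Measurable φ := (rearrE_anti _ _).measurable
  calc ∫⁻ t in Iset b, φ t * ENNReal.ofReal (h t)
      = ∫⁻ t, φ t * ENNReal.ofReal (h t) ∂((volI b).map σ) := by rw [hσ1]; rfl
    _ = ∫⁻ x in Iset b, φ (σ x) * ENNReal.ofReal (h (σ x)) := by
        exact lintegral_map (f := fun t => φ t * ENNReal.ofReal (h t))
          (hφm.mul hh.ennreal_ofReal) hσm
    _ ≤ ∫⁻ x in Iset b, ENNReal.ofReal |f x * g x| := by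
        refine setLIntegral_mono' (meas_Iset b) fun x hx => ?_
        rw [abs_mul, ENNReal.ofReal_mul (abs_nonneg _)]
        refine mul_le_mul' (rearrE_le (hσ2 x)) ?_
        simp only [hg, indicator_of_mem hx, Function.comp]
        exact ENNReal.ofReal_le_ofReal (le_abs_self _)
    _ ≤ _ := lintegral_mono_set hsub

theorem lower_dir {a : ℝ≥0∞} {w : ℝ → ℝ} {p : ℝ} (hp : 0 ≤ p)
    {f : ℝ → ℝ} (hf : Measurable f) {h : ℝ → ℝ} (hh : Measurable h)
    (hanti : AntitoneOn h (Iset a)) (hnn : ∀ t ∈ Iset a, 0 ≤ h t)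
    (h1 : ∫⁻ t in Iset a, ENNReal.ofReal (h t) ^ p * ENNReal.ofReal (w t) ≤ 1) :
    ∫⁻ t in Iset a, rearr (volI a) f t * ENNReal.ofReal (h t)
      ≤ lorentzDualNorm a w p f := by
  set G : ℝ → ℝ≥0∞ := fun x => ENNReal.ofReal |f x| with hG
  set b : ℕ → ℝ≥0∞ := fun n => min a n with hb
  have hbm : Monotone b := fun m n hmn => min_le_min le_rfl (by exact_mod_cast hmn)
  have hIm : Monotone fun n => Iset (b n) := fun m n hmn x hx => ⟨hx.1, lt_of_lt_of_le hx.2 (hbm hmn)⟩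
  have hU : Iset a = ⋃ n, Iset (b n) := by
    ext x
    simp only [mem_iUnion]
    constructor
    · intro hx
      obtain ⟨n, hn⟩ := ENNReal.exists_nat_gt (r := ENNReal.ofReal x) ENNReal.ofReal_ne_top
      exact ⟨n, hx.1, lt_min hx.2 hn⟩
    · rintro ⟨n, hx⟩
      exact ⟨hx.1, lt_of_lt_of_le hx.2 (min_le_left _ _)⟩
  have hvm : ∀ m n, m ≤ n → ∀ S : Set ℝ, volI (b m) S ≤ volI (b n) S := by
    intro m n hmn S
    exact Measure.restrict_mono (hIm hmn) le_rfl S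
  have hvsup : ∀ S : Set ℝ, volI a S = ⨆ n, volI (b n) S := by
    intro S
    simp_rw [volI, Measure.restrict_apply' (meas_Iset _)]
    rw [hU, inter_iUnion, Monotone.measure_iUnion]
    intro m n hmn
    exact inter_subset_inter_right _ (hIm hmn)
  have hrm : ∀ t, Monotone fun n => rearrE (volI (b n)) G t := by
    intro t m n hmn
    refine sInf_le_sInf ?_
    rintro s ⟨hs, h2⟩
    exact ⟨hs, (hvm m n hmn _).trans h2⟩
  have hsup : ∀ t, rearr (volI a) f t ≤ ⨆ n, rearrE (volI (b n)) G t := by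
    intro t
    refine le_of_forall_lt_imp_le_of_dense fun c hc => ?_
    have := lt_meas_of_lt_rearrE hc
    rw [hvsup, lt_iSup_iff] at this
    obtain ⟨n, hn⟩ := this
    exact (le_rearrE hn).trans (le_iSup (fun n => rearrE (volI (b n)) G t) n)
  calc ∫⁻ t in Iset a, rearr (volI a) f t * ENNReal.ofReal (h t)
      ≤ ∫⁻ t in Iset a, ⨆ n, rearrE (volI (b n)) G t * ENNReal.ofReal (h t) := by
        refine lintegral_mono fun t => ?_
        rw [← ENNReal.iSup_mul]
        exact mul_le_mul' (hsup t) le_rfl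
    _ = ⨆ n, ∫⁻ t in Iset a, rearrE (volI (b n)) G t * ENNReal.ofReal (h t) := by
        refine lintegral_iSup (fun n => (rearrE_anti _ _).measurable.mul hh.ennreal_ofReal) ?_
        intro m n hmn t
        exact mul_le_mul' (hrm t hmn) le_rfl
    _ ≤ lorentzDualNorm a w p f := by
        refine iSup_le fun n => ?_
        have hbf : b n ≠ ∞ := ne_top_of_le_ne_top (ENNReal.natCast_ne_top n) (min_le_right _ _)
        refine le_trans ?_ (lower_piece hbf (min_le_left _ _) hp hf hh hanti hnn h1)
        rw [← lintegral_indicator (meas_Iset a), ← lintegral_indicator (meas_Iset (b n))]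
        refine lintegral_mono fun t => ?_
        by_cases hta : t ∈ Iset a
        · rw [indicator_of_mem hta]
          by_cases htb : t ∈ Iset (b n)
          · rw [indicator_of_mem htb]
          · have : rearrE (volI (b n)) G t = 0 := by
              refine le_antisymm (rearrE_le ?_) bot_le
              refine (measure_mono (subset_univ _)).trans ?_
              have e : b n ≤ ENNReal.ofReal t := by
                by_contra hcon
                exact htb ⟨hta.1, not_le.1 hcon⟩
              simpa [volI, vol_Iset] using e
            simp [this]
        · simp [indicator_of_notMem hta]

/-- A non-increasing nonnegative locally integrable function on `(0,a)`. -/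
structure LocW (a : ℝ≥0∞) (φ : ℝ → ℝ) : Prop where
  anti : AntitoneOn φ (Iset a)
  nonneg : ∀ t ∈ Iset a, 0 ≤ φ t
  int : ∀ x ∈ Iset a, IntegrableOn φ (Ioc 0 x)

/-- Primitive. -/
noncomputable def Prim (φ : ℝ → ℝ) (x : ℝ) : ℝ := ∫ t in (0:ℝ)..x, φ t

theorem Prim_zero (φ : ℝ → ℝ) : Prim φ 0 = 0 := by simp [Prim]

theorem Ioc_sub_Iset {a : ℝ≥0∞} {u y : ℝ} (hu : 0 ≤ u) (hy : y ∈ Iset a) : Ioc u y ⊆ Iset a :=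
  fun _ hx => Iset_down hy (lt_of_le_of_lt hu hx.1) hx.2

theorem LocW.ii {a : ℝ≥0∞} {φ : ℝ → ℝ} (h : LocW a φ) {u y : ℝ} (hu : 0 ≤ u) (huy : u ≤ y)
    (hy : y ∈ Iset a) : IntervalIntegrable φ volume u y := by
  rw [intervalIntegrable_iff_integrableOn_Ioc_of_le huy]
  exact (h.int y hy).mono_set (Ioc_subset_Ioc_left hu)

theorem LocW.sub {a : ℝ≥0∞} {φ : ℝ → ℝ} (h : LocW a φ) {u y : ℝ} (hu : 0 ≤ u) (huy : u ≤ y)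
    (hy : y ∈ Iset a) : Prim φ y - Prim φ u = ∫ t in u..y, φ t := by
  have hiu : IntervalIntegrable φ volume 0 u :=
    (h.ii le_rfl (hu.trans huy) hy).mono_set (by
      rw [uIcc_of_le hu, uIcc_of_le (hu.trans huy)]; exact Icc_subset_Icc_right huy)
  exact intervalIntegral.integral_interval_sub_left (h.ii le_rfl (hu.trans huy) hy) hiu

theorem LocW.cont {a : ℝ≥0∞} {φ : ℝ → ℝ} (h : LocW a φ) {y : ℝ} (hy : y ∈ Iset a) :
    ContinuousOn (Prim φ) (Icc 0 y) := by
  have h0 : 0 ≤ y := hy.1.le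
  have := intervalIntegral.continuousOn_primitive_interval (f := φ) (μ := volume) (a := 0) (b := y)
    (by rw [uIcc_of_le h0, integrableOn_Icc_iff_integrableOn_Ioc]; exact h.int y hy)
  rwa [uIcc_of_le h0] at this

theorem LocW.lower {a : ℝ≥0∞} {φ : ℝ → ℝ} (h : LocW a φ) {u y c : ℝ} (hu : 0 ≤ u) (huy : u ≤ y)
    (hy : y ∈ Iset a) (hc : ∀ t ∈ Ioo u y, c ≤ φ t) : c * (y - u) ≤ Prim φ y - Prim φ u := by
  rw [h.sub hu huy hy]
  have := intervalIntegral.integral_mono_on_of_le_Ioo huy (intervalIntegrable_const (c := c))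
    (h.ii hu huy hy) hc
  rw [intervalIntegral.integral_const] at this
  simpa [mul_comm] using this

theorem LocW.upper {a : ℝ≥0∞} {φ : ℝ → ℝ} (h : LocW a φ) {u y c : ℝ} (hu : 0 ≤ u) (huy : u ≤ y)
    (hy : y ∈ Iset a) (hc : ∀ t ∈ Ioo u y, φ t ≤ c) : Prim φ y - Prim φ u ≤ c * (y - u) := by
  rw [h.sub hu huy hy]
  have := intervalIntegral.integral_mono_on_of_le_Ioo huy
    (h.ii hu huy hy) (intervalIntegrable_const (c := c)) hc
  rw [intervalIntegral.integral_const] at this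
  simpa [mul_comm] using this

theorem LocW.mono {a : ℝ≥0∞} {φ : ℝ → ℝ} (h : LocW a φ) {u y : ℝ} (hu : 0 ≤ u) (huy : u ≤ y)
    (hy : y ∈ Iset a) : Prim φ u ≤ Prim φ y := by
  have := h.lower (c := 0) hu huy hy
    (fun t ht => h.nonneg t (Iset_down hy (lt_of_le_of_lt hu ht.1) ht.2.le))
  linarith

theorem LocW.smono {a : ℝ≥0∞} {φ : ℝ → ℝ} (h : LocW a φ) (hpos : ∀ t ∈ Iset a, 0 < φ t)
    {u y : ℝ} (hu : 0 ≤ u) (huy : u < y)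
    (hy : y ∈ Iset a) : Prim φ u < Prim φ y := by
  have := h.lower (c := φ y) hu huy.le hy
    (fun t ht => h.anti (Iset_down hy (lt_of_le_of_lt hu ht.1) ht.2.le) hy ht.2.le)
  have := mul_pos (hpos y hy) (sub_pos.2 huy)
  linarith

theorem LocW.meas {a : ℝ≥0∞} {φ : ℝ → ℝ} (h : LocW a φ) {u y : ℝ} (hu : 0 ≤ u) (huy : u ≤ y)
    (hy : y ∈ Iset a) : wMeas (Iset a) φ (Ioc u y) = ENNReal.ofReal (Prim φ y - Prim φ u) := by
  rw [wMeas_apply _ _ measurableSet_Ioc (Ioc_sub_Iset hu hy), h.sub hu huy hy,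
    intervalIntegral.integral_of_le huy, ofReal_integral_eq_lintegral_ofReal]
  · exact (h.int y hy).mono_set (Ioc_subset_Ioc_left hu)
  · refine (ae_restrict_iff' measurableSet_Ioc).2 (Eventually.of_forall fun t ht => ?_)
    exact h.nonneg t (Ioc_sub_Iset hu hy ht)

/-- `y` is an `r`-record. -/
def Rec (a : ℝ≥0∞) (φ w : ℝ → ℝ) (r y : ℝ) : Prop :=
  y ∈ Iset a ∧ ∀ u, 0 ≤ u → u ≤ y → Prim φ u - r * Prim w u ≤ Prim φ y - r * Prim w y

/-- The slope of the level function. -/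
noncomputable def lam (a : ℝ≥0∞) (φ w : ℝ → ℝ) (t : ℝ) : ℝ :=
  sSup {r | 0 ≤ r ∧ ∃ y, t < y ∧ Rec a φ w r y}

theorem Rec.anti {a : ℝ≥0∞} {φ w : ℝ → ℝ} (hw : LocW a w) {r r' y : ℝ} (h : Rec a φ w r y)
    (hr : r' ≤ r) : Rec a φ w r' y := by
  refine ⟨h.1, fun u hu huy => ?_⟩
  have h1 := h.2 u hu huy
  have h2 := hw.mono hu huy h.1
  nlinarith

/-- Data of the core problem. -/
structure Core (a : ℝ≥0∞) (φ w : ℝ → ℝ) : Prop where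
  hφ : LocW a φ
  hw : LocW a w
  wpos : ∀ t ∈ Iset a, 0 < w t
  rc : ∀ t ∈ Iset a, ∀ c, 0 ≤ c → c < φ t → ∃ t' > t, t' ∈ Iset a ∧ c < φ t'
  bd : ∀ t ∈ Iset a, ∃ R, ∀ r y, 0 ≤ r → t < y → Rec a φ w r y → r ≤ R
  fin : ∀ s, 0 < s → ∃ K, ∀ y, Rec a φ w s y → Prim φ y ≤ K

theorem Iset_above {a : ℝ≥0∞} {t : ℝ} (ht : t ∈ Iset a) : ∃ y, t < y ∧ y ∈ Iset a := by
  obtain ⟨c, hc1, hc2⟩ := exists_between ht.2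
  have hcf := hc2.ne_top
  have := (ENNReal.ofReal_lt_iff_lt_toReal ht.1.le hcf).1 hc1
  exact ⟨c.toReal, this, ht.1.trans this, by rwa [ENNReal.ofReal_toReal hcf]⟩

section core
variable {a : ℝ≥0∞} {φ w : ℝ → ℝ}

theorem Core.bdd (h : Core a φ w) {t : ℝ} (ht : t ∈ Iset a) :
    BddAbove {r | 0 ≤ r ∧ ∃ y, t < y ∧ Rec a φ w r y} := by
  obtain ⟨R, hR⟩ := h.bd t ht
  refine ⟨R, ?_⟩
  rintro r ⟨hr, y, hy, h2⟩
  exact hR r y hr hy h2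

theorem Core.zero_mem (h : Core a φ w) {t : ℝ} (ht : t ∈ Iset a) :
    (0:ℝ) ∈ {r | 0 ≤ r ∧ ∃ y, t < y ∧ Rec a φ w r y} := by
  obtain ⟨y, hty, hy⟩ := Iset_above ht
  refine ⟨le_rfl, y, hty, hy, fun u hu huy => ?_⟩
  have := h.hφ.mono hu huy hy
  linarith

theorem Core.lam_nonneg (h : Core a φ w) {t : ℝ} (ht : t ∈ Iset a) : 0 ≤ lam a φ w t :=
  le_csSup (h.bdd ht) (h.zero_mem ht)

theorem Core.le_lam (h : Core a φ w) {t r y : ℝ} (ht : t ∈ Iset a) (hr : 0 ≤ r) (hty : t < y)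
    (hy : Rec a φ w r y) : r ≤ lam a φ w t :=
  le_csSup (h.bdd ht) ⟨hr, y, hty, hy⟩

theorem Core.lt_lam (h : Core a φ w) {t s : ℝ} (ht : t ∈ Iset a) (hs : s < lam a φ w t) :
    ∃ r, s < r ∧ ∃ y, t < y ∧ Rec a φ w r y := by
  obtain ⟨r, ⟨_, y, hy, h2⟩, h3⟩ := exists_lt_of_lt_csSup ⟨0, h.zero_mem ht⟩ hs
  exact ⟨r, h3, y, hy, h2⟩

theorem Core.lam_anti (h : Core a φ w) : AntitoneOn (lam a φ w) (Iset a) := by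
  intro t ht t' ht' htt
  refine csSup_le_csSup (h.bdd ht) ⟨0, h.zero_mem ht'⟩ ?_
  rintro r ⟨hr, y, hy, h2⟩
  exact ⟨hr, y, lt_of_le_of_lt htt hy, h2⟩

theorem Core.ratio (h : Core a φ w) {t t' r r' y : ℝ} (ht : t ∈ Iset a) (ht' : t' ∈ Iset a)
    (hr' : 0 ≤ r') (hrr : r' < r) (hty : t < y) (hyt : y ≤ t') (hy : Rec a φ w r y)
    (hl : lam a φ w t' < r') : r * φ t' ≤ r' * φ t := by
  by_contra hcon
  push Not at hcon
  have hr : 0 < r := lt_of_le_of_lt hr' hrr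
  have hw1 : ∀ ξ ∈ Iset a, y ≤ ξ → r * w ξ ≤ φ t := by
    intro ξ hξ hyξ
    have e1 := hy.2 t ht.1.le hty.le
    have e2 := h.hφ.upper ht.1.le hty.le hy.1 (c := φ t)
      (fun x hx => h.hφ.anti ht (Iset_down hy.1 (ht.1.trans hx.1) hx.2.le) hx.1.le)
    have e3 := h.hw.lower ht.1.le hty.le hy.1 (c := w ξ)
      (fun x hx => h.hw.anti (Iset_down hy.1 (ht.1.trans hx.1) hx.2.le) hξ (hx.2.le.trans hyξ))
    have e4 := mul_le_mul_of_nonneg_left e3 hr.le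
    have e5 : (r * w ξ) * (y - t) ≤ φ t * (y - t) := by nlinarith
    exact le_of_mul_le_mul_right e5 (sub_pos.2 hty)
  have hc0 : 0 ≤ r' * φ t / r := div_nonneg (mul_nonneg hr' (h.hφ.nonneg t ht)) hr.le
  obtain ⟨t'', htt, ht'', hc⟩ := h.rc t' ht' (r' * φ t / r) hc0 (by
    rw [div_lt_iff₀ hr]; linarith)
  have hrec : Rec a φ w r' t'' := by
    have key : ∀ u, y ≤ u → u ≤ t'' → Prim φ u - r' * Prim w u ≤ Prim φ t'' - r' * Prim w t'' := by
      intro u hyu hut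
      have hu0 : 0 ≤ u := hy.1.1.le.trans hyu
      have e1 := h.hφ.lower hu0 hut ht'' (c := r' * φ t / r) (fun x hx => hc.le.trans
        (h.hφ.anti (Iset_down ht'' (lt_of_le_of_lt hu0 hx.1) hx.2.le) ht'' hx.2.le))
      have e2 := h.hw.upper hu0 hut ht'' (c := φ t / r) (fun x hx => by
        rw [le_div_iff₀ hr, mul_comm]
        exact hw1 x (Iset_down ht'' (lt_of_le_of_lt hu0 hx.1) hx.2.le) (hyu.trans hx.1.le))
      have e3 := mul_le_mul_of_nonneg_left e2 hr'
      have e4 : r' * (φ t / r * (t'' - u)) = r' * φ t / r * (t'' - u) := by ring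
      linarith
    refine ⟨ht'', fun u hu hut => ?_⟩
    rcases le_total y u with hyu | hyu
    · exact key u hyu hut
    · exact ((hy.anti h.hw hrr.le).2 u hu hyu).trans (key y le_rfl (hyt.trans htt.le))
  exact absurd (h.le_lam ht' hr' htt hrec) (not_le.2 hl)

theorem Core.v_anti (h : Core a φ w) : AntitoneOn (fun t => φ t / lam a φ w t) (Iset a) := by
  intro t ht t' ht' htt
  change φ t' / lam a φ w t' ≤ φ t / lam a φ w t
  have hl0 := h.lam_nonneg ht'
  have hφ0 := h.hφ.nonneg t' ht'
  have hφtt := h.hφ.anti ht ht' htt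
  rcases (h.lam_anti ht ht' htt).eq_or_lt with he | hlt
  · rw [he]
    exact div_le_div_of_nonneg_right hφtt (he ▸ hl0)
  have hlp : 0 < lam a φ w t := lt_of_le_of_lt hl0 hlt
  rcases hφ0.eq_or_lt with h0 | h0
  · rw [← h0, zero_div]
    exact div_nonneg (h.hφ.nonneg t ht) hlp.le
  have hφp : 0 < φ t := lt_of_lt_of_le h0 hφtt
  have key : lam a φ w t * φ t' / φ t ≤ lam a φ w t' := by
    refine le_of_forall_gt_imp_ge_of_dense fun r' hr' => ?_
    rw [div_le_iff₀ hφp, ← le_div_iff₀ h0]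
    refine le_of_forall_lt_imp_le_of_dense fun r hr => ?_
    have hr'0 : 0 ≤ r' := hl0.trans hr'.le
    rcases le_or_gt r r' with hrr | hrr
    · rw [le_div_iff₀ h0]
      calc r * φ t' ≤ r' * φ t' := mul_le_mul_of_nonneg_right hrr h0.le
        _ ≤ r' * φ t := mul_le_mul_of_nonneg_left hφtt hr'0
    · rw [le_div_iff₀ h0]
      obtain ⟨r1, hr1, y, hty, hy⟩ := h.lt_lam ht hr
      have hy' := hy.anti h.hw hr1.le
      refine h.ratio ht ht' hr'0 hrr hty ?_ hy' hr'
      by_contra hyt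
      push Not at hyt
      have := h.le_lam ht' (hr'0.trans hrr.le) hyt hy'
      linarith
  rw [div_le_iff₀ hφp] at key
  have hl0' : 0 < lam a φ w t' := by
    rcases hl0.eq_or_lt with e | e
    · rw [← e] at key
      have := mul_pos hlp h0
      linarith
    · exact e
  rw [div_le_div_iff₀ hl0' hlp]
  linarith

end core

theorem grid_pieces {ρ : ℝ → ℝ} (hρ : Measurable ρ) {c : ℝ} (hc : 1 < c) :
    (∀ k : ℤ, MeasurableSet {x | c ^ k < ρ x ∧ ρ x ≤ c ^ (k+1)}) ∧
    Pairwise (Function.onFun Disjoint fun k : ℤ => {x | c ^ k < ρ x ∧ ρ x ≤ c ^ (k+1)}) ∧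
    {x | 0 < ρ x} = ⋃ k : ℤ, {x | c ^ k < ρ x ∧ ρ x ≤ c ^ (k+1)} := by
  refine ⟨fun k => (measurableSet_lt measurable_const hρ).inter
    (measurableSet_le hρ measurable_const), ?_, ?_⟩
  · have key : ∀ j k : ℤ, j < k → Disjoint {x | c ^ j < ρ x ∧ ρ x ≤ c ^ (j+1)}
        {x | c ^ k < ρ x ∧ ρ x ≤ c ^ (k+1)} := by
      intro j k hjk
      refine Set.disjoint_left.2 fun x hx hx' => ?_
      have : c ^ (j+1) ≤ c ^ k := zpow_le_zpow_right₀ hc.le (by lia)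
      linarith [hx.2, hx'.1]
    intro j k hjk
    rcases lt_or_gt_of_ne hjk with h | h
    · exact key j k h
    · exact (key k j h).symm
  · ext x
    simp only [mem_ofPred_eq, mem_iUnion]
    constructor
    · intro hx
      obtain ⟨k, hk⟩ := exists_mem_Ioc_zpow hx hc
      exact ⟨k, hk⟩
    · rintro ⟨k, hk, _⟩
      exact lt_trans (zpow_pos (by linarith) k) hk

theorem le_of_forall_c {X Y : ℝ≥0∞} (q : ℝ) (h : ∀ c : ℝ, 1 < c → X ≤ ENNReal.ofReal c ^ q * Y) :
    X ≤ Y := by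
  have ht : Tendsto (fun c : ℝ => ENNReal.ofReal c ^ q * Y) (nhdsWithin 1 (Ioi 1)) (nhds Y) := by
    have h1 : Tendsto (fun c : ℝ => ENNReal.ofReal c ^ q) (nhdsWithin 1 (Ioi 1)) (nhds 1) := by
      have : Tendsto (fun c : ℝ => ENNReal.ofReal c ^ q) (nhds 1) (nhds (ENNReal.ofReal 1 ^ q)) :=
        ((ENNReal.continuous_rpow_const).comp ENNReal.continuous_ofReal).tendsto 1
      rw [ENNReal.ofReal_one, ENNReal.one_rpow] at this
      exact this.mono_left nhdsWithin_le_nhds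
    have := ENNReal.Tendsto.mul_const (b := Y) h1 (Or.inl one_ne_zero)
    rwa [one_mul] at this
  refine ge_of_tendsto ht ?_
  filter_upwards [self_mem_nhdsWithin] with c hc using h c hc

theorem grid_one {α β : Measure ℝ} {ρ : ℝ → ℝ} (hρ : Measurable ρ)
    (h : ∀ s r, 0 < s → s < r → α {x | s < ρ x ∧ ρ x ≤ r} ≤ ENNReal.ofReal r * β {x | s < ρ x ∧ ρ x ≤ r}) :
    ∫⁻ x in {x | 0 < ρ x}, (ENNReal.ofReal (ρ x))⁻¹ ∂α ≤ β {x | 0 < ρ x} := by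
  refine le_of_forall_c 1 fun c hc => ?_
  obtain ⟨hm, hd, hU⟩ := grid_pieces hρ hc
  have hc0 : 0 < c := by linarith
  rw [hU, lintegral_iUnion hm hd, measure_iUnion hd hm, ← ENNReal.tsum_mul_left]
  refine ENNReal.tsum_le_tsum fun k => ?_
  have hk : 0 < c ^ k := zpow_pos hc0 k
  have hk1 : c ^ (k+1) = c ^ k * c := zpow_add_one₀ hc0.ne' k
  calc ∫⁻ x in {x | c ^ k < ρ x ∧ ρ x ≤ c ^ (k+1)}, (ENNReal.ofReal (ρ x))⁻¹ ∂α
      ≤ ∫⁻ x in {x | c ^ k < ρ x ∧ ρ x ≤ c ^ (k+1)}, (ENNReal.ofReal (c ^ k))⁻¹ ∂α := by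
        refine setLIntegral_mono' (hm k) fun x hx => ?_
        exact ENNReal.inv_le_inv.2 (ENNReal.ofReal_le_ofReal hx.1.le)
    _ = (ENNReal.ofReal (c ^ k))⁻¹ * α {x | c ^ k < ρ x ∧ ρ x ≤ c ^ (k+1)} := by
        rw [setLIntegral_const]
    _ ≤ (ENNReal.ofReal (c ^ k))⁻¹ * (ENNReal.ofReal (c ^ (k+1)) *
          β {x | c ^ k < ρ x ∧ ρ x ≤ c ^ (k+1)}) := by
        gcongr
        exact h _ _ hk (by rw [hk1]; nlinarith)
    _ = _ := by
        rw [hk1, ENNReal.ofReal_mul hk.le, ← mul_assoc, ← mul_assoc,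
          ENNReal.inv_mul_cancel (by simpa using hk) ENNReal.ofReal_ne_top, one_mul, ENNReal.rpow_one,
          ← hk1]

theorem grid_two {α β : Measure ℝ} {ρ : ℝ → ℝ} (hρ : Measurable ρ) {q : ℝ} (hq : 1 < q)
    (h : ∀ s r, 0 < s → s < r → ENNReal.ofReal s * β {x | s < ρ x ∧ ρ x ≤ r} ≤ α {x | s < ρ x ∧ ρ x ≤ r}) :
    ∫⁻ x in {x | 0 < ρ x}, ENNReal.ofReal (ρ x) ^ q ∂β ≤
      ∫⁻ x in {x | 0 < ρ x}, ENNReal.ofReal (ρ x) ^ (q - 1) ∂α := by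
  refine le_of_forall_c q fun c hc => ?_
  obtain ⟨hm, hd, hU⟩ := grid_pieces hρ hc
  have hc0 : 0 < c := by linarith
  rw [hU, lintegral_iUnion hm hd, lintegral_iUnion hm hd, ← ENNReal.tsum_mul_left]
  refine ENNReal.tsum_le_tsum fun k => ?_
  have hk : 0 < c ^ k := zpow_pos hc0 k
  have hk1 : c ^ (k+1) = c ^ k * c := zpow_add_one₀ hc0.ne' k
  have hk0 : ENNReal.ofReal (c ^ k) ≠ 0 := by simpa using hk
  calc ∫⁻ x in {x | c ^ k < ρ x ∧ ρ x ≤ c ^ (k+1)}, ENNReal.ofReal (ρ x) ^ q ∂β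
      ≤ ∫⁻ x in {x | c ^ k < ρ x ∧ ρ x ≤ c ^ (k+1)}, ENNReal.ofReal (c ^ (k+1)) ^ q ∂β := by
        refine setLIntegral_mono' (hm k) fun x hx => ?_
        exact ENNReal.rpow_le_rpow (ENNReal.ofReal_le_ofReal hx.2) (by linarith)
    _ = ENNReal.ofReal (c ^ (k+1)) ^ q * β {x | c ^ k < ρ x ∧ ρ x ≤ c ^ (k+1)} := by
        rw [setLIntegral_const]
    _ = ENNReal.ofReal c ^ q * (ENNReal.ofReal (c ^ k) ^ (q-1) * (ENNReal.ofReal (c ^ k) *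
          β {x | c ^ k < ρ x ∧ ρ x ≤ c ^ (k+1)})) := by
        have e : ENNReal.ofReal (c ^ k) ^ q = ENNReal.ofReal (c ^ k) ^ (q-1) * ENNReal.ofReal (c ^ k) := by
          conv_rhs => rw [← ENNReal.rpow_one (ENNReal.ofReal (c ^ k)), ← ENNReal.rpow_mul, one_mul]
          rw [← ENNReal.rpow_add _ _ hk0 ENNReal.ofReal_ne_top]
          congr 1; ring
        conv_lhs => rw [hk1, ENNReal.ofReal_mul hk.le, ENNReal.mul_rpow_of_nonneg _ _ (by linarith : 0 ≤ q), e,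
          ← hk1]
        ring
    _ ≤ ENNReal.ofReal c ^ q * (ENNReal.ofReal (c ^ k) ^ (q-1) *
          α {x | c ^ k < ρ x ∧ ρ x ≤ c ^ (k+1)}) := by
        gcongr
        exact h _ _ hk (by rw [hk1]; nlinarith)
    _ ≤ _ := by
        gcongr
        rw [← setLIntegral_const]
        refine setLIntegral_mono' (hm k) fun x hx => ?_
        exact ENNReal.rpow_le_rpow (ENNReal.ofReal_le_ofReal hx.1.le) (by linarith)

theorem InitSeg.split {B : Set ℝ} (hB : InitSeg B) {y : ℝ} (hy : 0 ≤ y) :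
    ∃ z, 0 ≤ z ∧ z ≤ y ∧ ∀ u, 0 < u → u < y → (u < z → u ∈ B) ∧ (z < u → u ∉ B) := by
  have hbd : BddAbove (insert 0 (B ∩ Ioo 0 y)) := by
    refine ⟨y, ?_⟩
    rintro x (rfl | hx)
    · exact hy
    · exact hx.2.2.le
  refine ⟨sSup (insert 0 (B ∩ Ioo 0 y)), le_csSup hbd (mem_insert _ _), ?_, ?_⟩
  · refine csSup_le ⟨0, mem_insert _ _⟩ ?_
    rintro x (rfl | hx)
    · exact hy
    · exact hx.2.2.le
  · intro u hu huy
    constructor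
    · intro h
      obtain ⟨x, hx, hux⟩ := exists_lt_of_lt_csSup ⟨0, mem_insert _ _⟩ h
      rcases hx with rfl | hx
      · exact absurd hux (not_lt.2 hu.le)
      · exact hB.2 x hx.1 u hu hux.le
    · intro h huB
      exact absurd (le_csSup hbd (mem_insert_of_mem _ ⟨huB, hu, huy⟩)) (not_le.2 h)

theorem diff_ae {S : Set ℝ} {z y : ℝ} (hz : 0 ≤ z)
    (h : ∀ u, 0 < u → u < y → (u < z → u ∈ S) ∧ (z < u → u ∉ S)) :
    (Ioo 0 y \ S : Set ℝ) =ᵐ[volume] Ioc z y := by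
  have h1 : ∀ c : ℝ, ∀ᵐ u ∂volume, u ≠ c := fun c => compl_mem_ae_iff.2 (measure_singleton c)
  refine Filter.eventuallyEq_set.2 ?_
  filter_upwards [h1 z, h1 y] with u hu1 hu2
  constructor
  · rintro ⟨⟨h3, h4⟩, h5⟩
    refine ⟨?_, h4.le⟩
    by_contra hcon
    exact h5 ((h u h3 h4).1 (lt_of_le_of_ne (not_lt.1 hcon) hu1))
  · rintro ⟨h3, h4⟩
    have h5 := lt_of_le_of_ne h4 hu2
    have h6 := lt_of_le_of_lt hz h3
    exact ⟨⟨h6, h5⟩, (h u h6 h5).2 h3⟩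

theorem inter_ae {S : Set ℝ} {z y : ℝ} (hz : z ≤ y)
    (h : ∀ u, 0 < u → u < y → (u < z → u ∈ S) ∧ (z < u → u ∉ S)) :
    (Ioo 0 y ∩ S : Set ℝ) =ᵐ[volume] Ioo 0 z := by
  have h1 : ∀ c : ℝ, ∀ᵐ u ∂volume, u ≠ c := fun c => compl_mem_ae_iff.2 (measure_singleton c)
  refine Filter.eventuallyEq_set.2 ?_
  filter_upwards [h1 z] with u hu1
  constructor
  · rintro ⟨⟨h3, h4⟩, h5⟩
    refine ⟨h3, ?_⟩
    by_contra hcon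
    exact (h u h3 h4).2 (lt_of_le_of_ne (not_lt.1 hcon) hu1.symm) h5
  · rintro ⟨h3, h4⟩
    have h5 := lt_of_lt_of_le h4 hz
    exact ⟨⟨h3, h5⟩, (h u h3 h5).1 h4⟩

section core
variable {a : ℝ≥0∞} {φ w : ℝ → ℝ}

/-- Superlevel sets of the level slope. -/
def lev (a : ℝ≥0∞) (φ w : ℝ → ℝ) (s : ℝ) : Set ℝ := {t | t ∈ Iset a ∧ s < lam a φ w t}

theorem Core.lev_init (h : Core a φ w) (s : ℝ) : InitSeg (lev a φ w s) :=
  ⟨fun t ht => ht.1.1, fun u hu t ht htu =>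
    ⟨Iset_down hu.1 ht htu, lt_of_lt_of_le hu.2 (h.lam_anti (Iset_down hu.1 ht htu) hu.1 htu)⟩⟩

theorem Core.rec_sub (h : Core a φ w) {s r y : ℝ} (hs : 0 ≤ s) (hsr : s < r) (hy : Rec a φ w r y) :
    Ioo 0 y ⊆ lev a φ w s := fun u hu =>
  ⟨Iset_down hy.1 hu.1 hu.2.le,
    lt_of_lt_of_le hsr (h.le_lam (Iset_down hy.1 hu.1 hu.2.le) (hs.trans hsr.le) hu.2 hy)⟩

theorem Core.lev_lower (h : Core a φ w) {s : ℝ} (hs : 0 ≤ s) {B : Set ℝ} (hB : InitSeg B) :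
    ENNReal.ofReal s * wMeas (Iset a) w (lev a φ w s \ B) ≤ wMeas (Iset a) φ (lev a φ w s \ B) := by
  have hBm := hB.meas
  have h1 : (ENNReal.ofReal s • (wMeas (Iset a) w).restrict Bᶜ) (lev a φ w s) ≤
      wMeas (Iset a) φ (lev a φ w s \ B) := by
    refine (h.lev_init s).measure_le ?_ fun x hx => ?_
    · exact ((Measure.restrict_le_self.absolutelyContinuous).trans (wMeas_ac _ _)).smul_left _
    obtain ⟨r, hr, y, hxy, hy⟩ := h.lt_lam hx.1 hx.2
    have hys := hy.anti h.hw hr.le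
    obtain ⟨z, hz0, hzy, hz⟩ := hB.split hy.1.1.le
    rw [Measure.smul_apply, Measure.restrict_apply measurableSet_Ioo, smul_eq_mul]
    calc ENNReal.ofReal s * wMeas (Iset a) w (Ioo 0 x ∩ Bᶜ)
        ≤ ENNReal.ofReal s * wMeas (Iset a) w (Ioo 0 y \ B) := by
          gcongr
          exact fun u hu => ⟨⟨hu.1.1, hu.1.2.trans hxy⟩, hu.2⟩
      _ = ENNReal.ofReal s * ENNReal.ofReal (Prim w y - Prim w z) := by
          rw [measure_congr ((wMeas_ac _ _).ae_eq (diff_ae hz0 hz)), h.hw.meas hz0 hzy hy.1]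
      _ ≤ ENNReal.ofReal (Prim φ y - Prim φ z) := by
          rw [← ENNReal.ofReal_mul hs]
          refine ENNReal.ofReal_le_ofReal ?_
          have := hys.2 z hz0 hzy
          linarith
      _ = wMeas (Iset a) φ (Ioo 0 y \ B) := by
          rw [measure_congr ((wMeas_ac _ _).ae_eq (diff_ae hz0 hz)), h.hφ.meas hz0 hzy hy.1]
      _ ≤ _ := measure_mono (diff_subset_diff_left (h.rec_sub hs hr hy))
  rw [Measure.smul_apply, Measure.restrict_apply (h.lev_init s).meas, smul_eq_mul] at h1
  exact h1

theorem Core.lev_fin (h : Core a φ w) {s : ℝ} (hs : 0 < s) : wMeas (Iset a) φ (lev a φ w s) ≠ ∞ := by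
  obtain ⟨K, hK⟩ := h.fin s hs
  refine ne_top_of_le_ne_top (ENNReal.ofReal_ne_top (r := K)) ?_
  refine (h.lev_init s).measure_le (wMeas_ac _ _) fun x hx => ?_
  obtain ⟨r, hr, y, hxy, hy⟩ := h.lt_lam hx.1 hx.2
  calc wMeas (Iset a) φ (Ioo 0 x) ≤ wMeas (Iset a) φ (Ioc 0 y) :=
        measure_mono fun u hu => ⟨hu.1, (hu.2.trans hxy).le⟩
    _ = ENNReal.ofReal (Prim φ y) := by rw [h.hφ.meas le_rfl hy.1.1.le hy.1, Prim_zero, sub_zero]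
    _ ≤ _ := ENNReal.ofReal_le_ofReal (hK y (hy.anti h.hw hr.le))

theorem Core.D_le (h : Core a φ w) {r x z : ℝ} (hr : 0 ≤ r) (hx : x ∈ Iset a) (hz0 : 0 ≤ z)
    (hzx : z ≤ x)
    (hz : ∀ u, 0 < u → u < x → (u < z → u ∈ lev a φ w r) ∧ (z < u → u ∉ lev a φ w r)) :
    Prim φ x - r * Prim w x ≤ Prim φ z - r * Prim w z := by
  rcases hzx.eq_or_lt with rfl | hzx'
  · exact le_rfl
  have hcont : ∀ r', ContinuousOn (fun u => Prim φ u - r' * Prim w u) (Icc 0 x) := fun r' =>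
    (h.hφ.cont hx).sub ((h.hw.cont hx).const_smul r')
  -- the maximum of D_r on [0,z] is at z
  have hmaxz : ∀ y, 0 ≤ y → y ≤ z → Prim φ y - r * Prim w y ≤ Prim φ z - r * Prim w z := by
    obtain ⟨m, hm, hmax⟩ := isCompact_Icc.exists_isMaxOn (nonempty_Icc.2 hz0)
      ((hcont r).mono (Icc_subset_Icc_right hzx))
    have hmz : m = z := by
      by_contra hne
      have hlt : m < z := lt_of_le_of_ne hm.2 hne
      obtain ⟨u, hu1, hu2⟩ := exists_between hlt
      have hu0 : 0 < u := lt_of_le_of_lt hm.1 hu1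
      have hul := (hz u hu0 (hu2.trans hzx')).1 hu2
      obtain ⟨r2, hr2, y, huy, hy⟩ := h.lt_lam hul.1 hul.2
      have hyz : y ≤ z := by
        by_contra hcon
        push Not at hcon
        obtain ⟨u', hu'1, hu'2⟩ := exists_between (lt_min hcon hzx')
        have := lt_min_iff.1 hu'2
        exact (hz u' (lt_of_le_of_lt hz0 hu'1) this.2).2 hu'1
          (h.rec_sub hr hr2 hy ⟨lt_of_le_of_lt hz0 hu'1, this.1⟩)
      have e1 := hy.2 m hm.1 (hu1.trans huy).le
      have e2 := h.hw.smono h.wpos hm.1 (hu1.trans huy) hy.1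
      have e3 : Prim φ y - r * Prim w y ≤ Prim φ m - r * Prim w m := hmax ⟨hu0.le.trans huy.le, hyz⟩
      nlinarith
    subst hmz
    exact fun y hy0 hy1 => hmax ⟨hy0, hy1⟩
  have key : ∀ r', r < r' → Prim φ x - r' * Prim w x ≤ Prim φ z - r * Prim w z := by
    intro r' hr'
    obtain ⟨m, hm, hmax⟩ := isCompact_Icc.exists_isMaxOn (nonempty_Icc.2 hx.1.le) (hcont r')
    have e1 : Prim φ x - r' * Prim w x ≤ Prim φ m - r' * Prim w m := hmax ⟨hx.1.le, le_rfl⟩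
    have hmz : m ≤ z := by
      by_contra hcon
      push Not at hcon
      have hm0 := lt_of_le_of_lt hz0 hcon
      have hrec : Rec a φ w r' m := ⟨Iset_down hx hm0 hm.2, fun u hu hum => hmax ⟨hu, hum.trans hm.2⟩⟩
      obtain ⟨u', hu'1, hu'2⟩ := exists_between hcon
      exact (hz u' (lt_of_le_of_lt hz0 hu'1) (lt_of_lt_of_le hu'2 hm.2)).2 hu'1
          (h.rec_sub hr hr' hrec ⟨lt_of_le_of_lt hz0 hu'1, hu'2⟩)
    have e2 := hmaxz m hm.1 hmz
    have e3 := h.hw.mono le_rfl hm.1 (y := m)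
    have e4 : 0 ≤ Prim w m := by
      rcases hm.1.eq_or_lt with e | e
      · rw [← e, Prim_zero]
      · have := h.hw.mono le_rfl hm.1 (Iset_down hx e hm.2)
        rwa [Prim_zero] at this
    nlinarith
  have hwx : 0 ≤ Prim w x := by
    have := h.hw.mono le_rfl hx.1.le hx
    rwa [Prim_zero] at this
  by_contra hcon
  push Not at hcon
  set δ := (Prim φ x - r * Prim w x) - (Prim φ z - r * Prim w z) with hδ
  have hδ0 : 0 < δ := by rw [hδ]; linarith
  have h1 := key (r + δ / (2 * (Prim w x + 1))) (by
    have : 0 < δ / (2 * (Prim w x + 1)) := by positivity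
    linarith)
  have h2 : δ / (2 * (Prim w x + 1)) * Prim w x ≤ δ / 2 := by
    rw [div_mul_eq_mul_div, div_le_div_iff₀ (by positivity) (by positivity)]
    nlinarith
  nlinarith

theorem Core.lev_upper (h : Core a φ w) {r x : ℝ} (hr : 0 ≤ r) (hx : x ∈ Iset a) {B : Set ℝ}
    (hB : InitSeg B) :
    wMeas (Iset a) φ ((Ioo 0 x ∩ B) \ lev a φ w r) ≤
      ENNReal.ofReal r * wMeas (Iset a) w ((Ioo 0 x ∩ B) \ lev a φ w r) := by
  obtain ⟨x1, hx0, hx1, hxs⟩ := hB.split hx.1.le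
  have hae : ((Ioo 0 x ∩ B) \ lev a φ w r : Set ℝ) =ᵐ[volume] (Ioo 0 x1 \ lev a φ w r : Set ℝ) :=
    (inter_ae hx1 hxs).diff (ae_eq_refl _)
  rw [measure_congr ((wMeas_ac _ _).ae_eq hae), measure_congr ((wMeas_ac _ _).ae_eq hae)]
  rcases hx0.eq_or_lt with e | e
  · simp [← e]
  have hxI := Iset_down hx e hx1
  obtain ⟨z, hz0, hzy, hz⟩ := (h.lev_init r).split hx0
  rw [measure_congr ((wMeas_ac _ _).ae_eq (diff_ae hz0 hz)),
    measure_congr ((wMeas_ac _ _).ae_eq (diff_ae hz0 hz)), h.hw.meas hz0 hzy hxI,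
    h.hφ.meas hz0 hzy hxI, ← ENNReal.ofReal_mul hr]
  refine ENNReal.ofReal_le_ofReal ?_
  have := h.D_le hr hxI hz0 hzy hz
  linarith

end core

/-- Measurable version of `lam`. -/
noncomputable def Lm (a : ℝ≥0∞) (φ w : ℝ → ℝ) : ℝ → ℝ := (Iset a).indicator (lam a φ w)

theorem Lm_eq {a : ℝ≥0∞} {φ w : ℝ → ℝ} {t : ℝ} (ht : t ∈ Iset a) : Lm a φ w t = lam a φ w t :=
  indicator_of_mem ht _

theorem Core.Lm_nonneg {a : ℝ≥0∞} {φ w : ℝ → ℝ} (h : Core a φ w) (t : ℝ) : 0 ≤ Lm a φ w t :=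
  indicator_nonneg (fun _ ht => h.lam_nonneg ht) t

theorem lt_Lm {a : ℝ≥0∞} {φ w : ℝ → ℝ} {s : ℝ} (hs : 0 ≤ s) (t : ℝ) :
    s < Lm a φ w t ↔ t ∈ lev a φ w s := by
  by_cases ht : t ∈ Iset a
  · rw [Lm_eq ht]; exact ⟨fun h => ⟨ht, h⟩, fun h => h.2⟩
  · have : Lm a φ w t = 0 := indicator_of_notMem ht _
    rw [this]
    exact ⟨fun h => absurd h (not_lt.2 hs), fun h => absurd h.1 ht⟩

theorem Core.Lm_meas {a : ℝ≥0∞} {φ w : ℝ → ℝ} (h : Core a φ w) : Measurable (Lm a φ w) := by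
  refine measurable_of_Ioi fun s => ?_
  rcases lt_or_ge s 0 with hs | hs
  · have : Lm a φ w ⁻¹' Ioi s = univ := eq_univ_of_forall fun t => lt_of_lt_of_le hs (h.Lm_nonneg t)
    rw [this]; exact MeasurableSet.univ
  · have : Lm a φ w ⁻¹' Ioi s = lev a φ w s := by
      ext t; exact lt_Lm hs t
    rw [this]; exact (h.lev_init s).meas

theorem LocW.aem {a : ℝ≥0∞} {φ : ℝ → ℝ} (h : LocW a φ) :
    AEMeasurable φ (volume.restrict (Iset a)) :=
  aemeasurable_restrict_of_antitoneOn (meas_Iset a) h.anti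

theorem Core.submaj {a : ℝ≥0∞} {φ w : ℝ → ℝ} (h : Core a φ w) {x : ℝ} (hx : x ∈ Iset a) :
    ∫⁻ t in Ioo 0 x, ENNReal.ofReal (φ t / lam a φ w t) ≤ ∫⁻ t in Ioo 0 x, ENNReal.ofReal (w t) := by
  have hsub := Ioo_sub_Iset hx
  have hm := h.Lm_meas
  have hpos : MeasurableSet {t | 0 < Lm a φ w t} := measurableSet_lt measurable_const hm
  have key := grid_one (α := (wMeas (Iset a) φ).restrict (Ioo 0 x))
    (β := (wMeas (Iset a) w).restrict (Ioo 0 x)) hm (fun s r hs hsr => by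
      have hset : {t | s < Lm a φ w t ∧ Lm a φ w t ≤ r} ∩ Ioo 0 x =
          (Ioo 0 x ∩ lev a φ w s) \ lev a φ w r := by
        ext t
        have h1 := lt_Lm (a := a) (φ := φ) (w := w) hs.le t
        have h2 := lt_Lm (a := a) (φ := φ) (w := w) (hs.trans hsr).le t
        simp only [mem_inter_iff, mem_ofPred_eq, Set.mem_sdiff, ← h1, ← h2, not_lt]
        tauto
      have hms : MeasurableSet {t | s < Lm a φ w t ∧ Lm a φ w t ≤ r} :=
        (measurableSet_lt measurable_const hm).inter (measurableSet_le hm measurable_const)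
      rw [Measure.restrict_apply hms, Measure.restrict_apply hms, hset]
      exact h.lev_upper (hs.trans hsr).le hx (h.lev_init s))
  rw [Measure.restrict_restrict hpos, Measure.restrict_apply hpos] at key
  have hR : wMeas (Iset a) w ({t | 0 < Lm a φ w t} ∩ Ioo 0 x) ≤ ∫⁻ t in Ioo 0 x, ENNReal.ofReal (w t) := by
    rw [← wMeas_apply _ _ measurableSet_Ioo hsub]
    exact measure_mono inter_subset_right
  refine le_trans ?_ (key.trans hR)
  have hk : Measurable (({t | 0 < Lm a φ w t} ∩ Ioo 0 x).indicator
      fun t => (ENNReal.ofReal (Lm a φ w t))⁻¹) :=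
    (hm.ennreal_ofReal.inv).indicator (hpos.inter measurableSet_Ioo)
  rw [← lintegral_indicator (hpos.inter measurableSet_Ioo), lintegral_wMeas _ h.hφ.aem hk]
  have hL : ∫⁻ t in Ioo 0 x, ENNReal.ofReal (φ t / lam a φ w t) = ∫⁻ t in Iset a,
      (Ioo 0 x).indicator (fun t => ENNReal.ofReal (φ t / lam a φ w t)) t := by
    rw [lintegral_indicator measurableSet_Ioo, Measure.restrict_restrict measurableSet_Ioo,
      inter_eq_left.2 hsub]
  rw [hL]
  refine setLIntegral_mono' (meas_Iset a) fun t ht => ?_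
  by_cases htx : t ∈ Ioo 0 x
  · rw [indicator_of_mem htx]
    by_cases hl : 0 < lam a φ w t
    · have hmem : t ∈ {t | 0 < Lm a φ w t} ∩ Ioo 0 x :=
        ⟨by rw [mem_ofPred_eq, Lm_eq ht]; exact hl, htx⟩
      rw [indicator_of_mem hmem, Lm_eq ht,
        ENNReal.ofReal_div_of_pos hl, div_eq_mul_inv, mul_comm]
    · have : lam a φ w t = 0 := le_antisymm (not_lt.1 hl) (h.lam_nonneg ht)
      simp [this]
  · rw [indicator_of_notMem htx]; exact zero_le

theorem Iset_init (a : ℝ≥0∞) : InitSeg (Iset a) :=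
  ⟨fun _ ht => ht.1, fun _ hu _ ht htu => Iset_down hu ht htu⟩

theorem Core.zero_ae {a : ℝ≥0∞} {φ w : ℝ → ℝ} (h : Core a φ w) :
    ∀ᵐ t ∂(volume.restrict (Iset a)), lam a φ w t = 0 → φ t = 0 := by
  have hS : MeasurableSet (lev a φ w 0) := (h.lev_init 0).meas
  have key : ((wMeas (Iset a) φ).restrict (lev a φ w 0)ᶜ) (Iset a) ≤ 0 := by
    refine (Iset_init a).measure_le
      ((Measure.restrict_le_self.absolutelyContinuous).trans (wMeas_ac _ _)) fun x hx => ?_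
    rw [Measure.restrict_apply measurableSet_Ioo]
    have h1 : Ioo 0 x ∩ (lev a φ w 0)ᶜ = (Ioo 0 x ∩ Iset a) \ lev a φ w 0 := by
      rw [inter_eq_left.2 (Ioo_sub_Iset hx)]; rfl
    rw [h1]
    refine (h.lev_upper le_rfl hx (Iset_init a)).trans ?_
    simp
  rw [nonpos_iff_eq_zero, Measure.restrict_apply (meas_Iset a),
    wMeas_apply _ _ ((meas_Iset a).inter hS.compl) inter_subset_left,
    lintegral_eq_zero_iff' ((h.hφ.aem.ennreal_ofReal).mono_measure
      (Measure.restrict_mono inter_subset_left le_rfl))] at key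
  have := (ae_restrict_iff' ((meas_Iset a).inter hS.compl)).1 key
  refine (ae_restrict_iff' (meas_Iset a)).2 ?_
  filter_upwards [this] with t ht hta hl
  have h2 := ht ⟨hta, fun h3 => by have := h3.2; linarith⟩
  exact le_antisymm (ENNReal.ofReal_eq_zero.1 h2) (h.hφ.nonneg t hta)

/-- Truncation of `Lm`. -/
noncomputable def Tr (a : ℝ≥0∞) (φ w : ℝ → ℝ) (n : ℕ) (t : ℝ) : ℝ :=
  if 1 / ((n:ℝ) + 1) < Lm a φ w t then min (Lm a φ w t) ((n:ℝ) + 1) else 0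

theorem Core.Tr_meas {a : ℝ≥0∞} {φ w : ℝ → ℝ} (h : Core a φ w) (n : ℕ) :
    Measurable (Tr a φ w n) := by
  unfold Tr
  exact Measurable.ite (measurableSet_lt measurable_const h.Lm_meas)
    (h.Lm_meas.min measurable_const) measurable_const

theorem Core.Tr_nonneg {a : ℝ≥0∞} {φ w : ℝ → ℝ} (h : Core a φ w) (n : ℕ) (t : ℝ) :
    0 ≤ Tr a φ w n t := by
  unfold Tr
  split_ifs
  · exact le_min (h.Lm_nonneg t) (by positivity)
  · exact le_rfl

theorem lt_Tr {a : ℝ≥0∞} {φ w : ℝ → ℝ} (n : ℕ) {s : ℝ} (hs : 0 ≤ s) (t : ℝ) :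
    s < Tr a φ w n t ↔ s < (n:ℝ) + 1 ∧ t ∈ lev a φ w (max s (1 / ((n:ℝ) + 1))) := by
  rw [← lt_Lm (hs.trans (le_max_left _ _)), max_lt_iff]
  unfold Tr
  split_ifs with h1
  · rw [lt_min_iff]; tauto
  · constructor
    · intro h; linarith
    · intro h; exact absurd h.2.2 h1

theorem Core.Tr_init {a : ℝ≥0∞} {φ w : ℝ → ℝ} (h : Core a φ w) (n : ℕ) {s : ℝ} (hs : 0 ≤ s) :
    InitSeg {t | s < Tr a φ w n t} := by
  constructor
  · intro t ht
    exact ((lt_Tr n hs t).1 ht).2.1.1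
  · intro u hu t ht htu
    obtain ⟨h1, h2⟩ := (lt_Tr n hs u).1 hu
    exact (lt_Tr n hs t).2 ⟨h1, (h.lev_init _).2 u h2 t ht htu⟩

theorem Core.Tr_anti {a : ℝ≥0∞} {φ w : ℝ → ℝ} (h : Core a φ w) (n : ℕ) :
    AntitoneOn (Tr a φ w n) (Iset a) := by
  intro t ht u hu htu
  by_contra hc
  push Not at hc
  have h1 : Tr a φ w n t < Tr a φ w n t := (h.Tr_init n (h.Tr_nonneg n t)).2 u hc t ht.1 htu
  exact lt_irrefl _ h1

theorem pow_full {ρ : ℝ → ℝ} (hρ : Measurable ρ) (hρ0 : ∀ t, 0 ≤ ρ t) {α : Measure ℝ} {r : ℝ} (hr : 0 < r) :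
    ∫⁻ x in {x | 0 < ρ x}, ENNReal.ofReal (ρ x) ^ r ∂α = ∫⁻ x, ENNReal.ofReal (ρ x) ^ r ∂α := by
  rw [← lintegral_indicator (measurableSet_lt measurable_const hρ)]
  refine lintegral_congr fun t => ?_
  by_cases ht : 0 < ρ t
  · exact indicator_of_mem (s := {x | 0 < ρ x}) ht _
  · have : ρ t = 0 := le_antisymm (not_lt.1 ht) (hρ0 t)
    rw [indicator_of_notMem (s := {x | 0 < ρ x}) ht, this]
    simp [hr]

theorem Core.Tr_grid {a : ℝ≥0∞} {φ w : ℝ → ℝ} (h : Core a φ w) (n : ℕ) {q : ℝ} (hq : 1 < q) :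
    ∫⁻ t, ENNReal.ofReal (Tr a φ w n t) ^ q ∂(wMeas (Iset a) w) ≤
      ∫⁻ t, ENNReal.ofReal (Tr a φ w n t) ^ (q - 1) ∂(wMeas (Iset a) φ) := by
  rw [← pow_full (α := wMeas (Iset a) w) (h.Tr_meas n) (h.Tr_nonneg n) (by linarith),
    ← pow_full (α := wMeas (Iset a) φ) (h.Tr_meas n) (h.Tr_nonneg n) (by linarith)]
  refine grid_two (h.Tr_meas n) hq fun s r hs hsr => ?_
  by_cases hsn : s < (n:ℝ) + 1
  · have hset : {t | s < Tr a φ w n t ∧ Tr a φ w n t ≤ r} =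
        lev a φ w (max s (1 / ((n:ℝ) + 1))) \ {t | r < Tr a φ w n t} := by
      ext t
      have := lt_Tr (a := a) (φ := φ) (w := w) n hs.le t
      simp only [mem_ofPred_eq, Set.mem_sdiff, this, not_lt]
      tauto
    rw [hset]
    refine le_trans ?_ (h.lev_lower (hs.le.trans (le_max_left _ _)) (h.Tr_init n (hs.trans hsr).le))
    gcongr
    exact le_max_left _ _
  · have hset : {t | s < Tr a φ w n t ∧ Tr a φ w n t ≤ r} = ∅ := by
      ext t
      have := lt_Tr (a := a) (φ := φ) (w := w) n hs.le t
      simp only [mem_ofPred_eq, this, mem_empty_iff_false]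
      tauto
    rw [hset]; simp

theorem Core.Tr_fin {a : ℝ≥0∞} {φ w : ℝ → ℝ} (h : Core a φ w) (n : ℕ) {q : ℝ} (hq : 1 < q) :
    ∫⁻ t, ENNReal.ofReal (Tr a φ w n t) ^ (q - 1) ∂(wMeas (Iset a) φ) ≠ ∞ := by
  have hn : (0:ℝ) < 1 / ((n:ℝ) + 1) := by positivity
  have hle : ∀ t, ENNReal.ofReal (Tr a φ w n t) ^ (q - 1) ≤
      (lev a φ w (1 / ((n:ℝ) + 1))).indicator (fun _ => ENNReal.ofReal ((n:ℝ) + 1) ^ (q - 1)) t := by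
    intro t
    by_cases ht : 1 / ((n:ℝ) + 1) < Lm a φ w t
    · rw [indicator_of_mem ((lt_Lm hn.le t).1 ht)]
      refine ENNReal.rpow_le_rpow (ENNReal.ofReal_le_ofReal ?_) (by linarith)
      rw [Tr, if_pos ht]; exact min_le_right _ _
    · rw [Tr, if_neg ht, ENNReal.ofReal_zero, ENNReal.zero_rpow_of_pos (by linarith)]
      exact zero_le
  refine ne_top_of_le_ne_top ?_ (lintegral_mono hle)
  rw [lintegral_indicator (h.lev_init _).meas, setLIntegral_const]
  exact ENNReal.mul_ne_top (ENNReal.rpow_ne_top_of_nonneg (by linarith) ENNReal.ofReal_ne_top)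
    (h.lev_fin hn)

theorem Core.Tr_event {a : ℝ≥0∞} {φ w : ℝ → ℝ} (h : Core a φ w) (t : ℝ) :
    ∀ᶠ n : ℕ in atTop, Tr a φ w n t = Lm a φ w t := by
  rcases (h.Lm_nonneg t).eq_or_lt with h0 | h0
  · refine Eventually.of_forall fun n => ?_
    rw [Tr, if_neg, h0]
    rw [← h0, not_lt]; positivity
  · have h1 := tendsto_one_div_add_atTop_nhds_zero_nat (𝕜 := ℝ)
    filter_upwards [h1.eventually_lt_const h0, eventually_ge_atTop ⌈Lm a φ w t⌉₊] with n hn1 hn2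
    rw [Tr, if_pos hn1, min_eq_left]
    have := Nat.ceil_le.1 hn2
    linarith

theorem Core.J_le {a : ℝ≥0∞} {φ w : ℝ → ℝ} (h : Core a φ w) {p q : ℝ} (hpq : p.HolderConjugate q)
    {M : ℝ≥0∞}
    (hdual : ∀ k : ℝ → ℝ, Measurable k → AntitoneOn k (Iset a) → (∀ t ∈ Iset a, 0 ≤ k t) →
      ∀ E : ℝ≥0∞, E ≠ 0 → E ≠ ∞ →
      ∫⁻ t in Iset a, ENNReal.ofReal (k t) ^ p * ENNReal.ofReal (w t) ≤ E →
      ∫⁻ t in Iset a, ENNReal.ofReal (φ t) * ENNReal.ofReal (k t) ≤ M * E ^ (1/p)) :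
    ∫⁻ t in Iset a, ENNReal.ofReal (φ t) * ENNReal.ofReal (lam a φ w t) ^ (q - 1) ≤ M ^ q := by
  have hq : 1 < q := hpq.symm.lt
  have hq0 : 0 < q := hpq.symm.pos
  have hp0 : 0 < p := hpq.pos
  have hpqr : (q - 1) * p = q := by
    have := hpq.symm.sub_one_mul_conj
    exact this
  have hn : ∀ n : ℕ, ∫⁻ t, ENNReal.ofReal (Tr a φ w n t) ^ (q - 1) ∂(wMeas (Iset a) φ) ≤ M ^ q := by
    intro n
    have hT := h.Tr_meas n
    have hnn := h.Tr_nonneg n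
    set J := ∫⁻ t, ENNReal.ofReal (Tr a φ w n t) ^ (q - 1) ∂(wMeas (Iset a) φ) with hJ
    have hJf : J ≠ ∞ := h.Tr_fin n hq
    by_cases hJ0 : J = 0
    · rw [hJ0]; exact zero_le
    have hpw : ∀ t, ENNReal.ofReal (Tr a φ w n t ^ (q - 1)) = ENNReal.ofReal (Tr a φ w n t) ^ (q - 1) :=
      fun t => (ENNReal.ofReal_rpow_of_nonneg (hnn t) (by linarith)).symm
    have h1 := hdual (fun t => Tr a φ w n t ^ (q - 1)) (hT.pow_const _)
      (fun t ht u hu htu => Real.rpow_le_rpow (hnn u) (h.Tr_anti n ht hu htu) (by linarith))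
      (fun t _ => Real.rpow_nonneg (hnn t) _) J hJ0 hJf (by
        refine le_trans (le_of_eq ?_) (h.Tr_grid n hq)
        rw [lintegral_wMeas _ h.hw.aem (hT.ennreal_ofReal.pow_const _)]
        refine lintegral_congr fun t => ?_
        rw [hpw, ← ENNReal.rpow_mul, hpqr])
    have h2 : J ≤ M * J ^ (1/p) := by
      refine le_trans (le_of_eq ?_) h1
      rw [hJ, lintegral_wMeas _ h.hφ.aem (hT.ennreal_ofReal.pow_const _)]
      refine lintegral_congr fun t => ?_
      rw [hpw, mul_comm]
    have hpos : J ^ (1/p) ≠ 0 := by simp [ENNReal.rpow_eq_zero_iff, hJ0, hJf]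
    have hfin : J ^ (1/p) ≠ ∞ := ENNReal.rpow_ne_top_of_nonneg (by positivity) hJf
    have h3 : J ^ (1/q) * J ^ (1/p) ≤ M * J ^ (1/p) := by
      rw [← ENNReal.rpow_add _ _ hJ0 hJf, show 1/q + 1/p = 1 by
        have := hpq.inv_add_inv_eq_one; rw [one_div, one_div]; linarith, ENNReal.rpow_one]
      exact h2
    have h4 : J ^ (1/q) ≤ M := (ENNReal.mul_le_mul_iff_left hpos hfin).1 h3
    have h5 := ENNReal.rpow_le_rpow h4 hq0.le
    rwa [← ENNReal.rpow_mul, one_div_mul_cancel hq0.ne', ENNReal.rpow_one] at h5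
  have hlim : ∫⁻ t, ENNReal.ofReal (Lm a φ w t) ^ (q - 1) ∂(wMeas (Iset a) φ) ≤ M ^ q := by
    have hF := lintegral_liminf_le (u := atTop) (μ := wMeas (Iset a) φ)
      (f := fun n t => ENNReal.ofReal (Tr a φ w n t) ^ (q - 1))
      (fun n => (h.Tr_meas n).ennreal_ofReal.pow_const _)
    have e : ∀ t, liminf (fun n => ENNReal.ofReal (Tr a φ w n t) ^ (q - 1)) atTop =
        ENNReal.ofReal (Lm a φ w t) ^ (q - 1) := by
      intro t
      refine Tendsto.liminf_eq (tendsto_const_nhds.congr' ?_)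
      filter_upwards [h.Tr_event t] with n hn
      rw [hn]
    simp only [e] at hF
    refine hF.trans ?_
    refine (liminf_le_liminf (Eventually.of_forall hn)).trans ?_
    simp
  rw [lintegral_wMeas _ h.hφ.aem (h.Lm_meas.ennreal_ofReal.pow_const _)] at hlim
  refine le_trans (le_of_eq ?_) hlim
  refine setLIntegral_congr_fun (meas_Iset a) fun t ht => ?_
  simp only [Lm_eq ht]
  rw [mul_comm]

theorem scaled_dual {a : ℝ≥0∞} {w : ℝ → ℝ} {p : ℝ} (hp : 0 < p)
    {f : ℝ → ℝ} (hf : Measurable f) {k : ℝ → ℝ} (hk : Measurable k)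
    (hanti : AntitoneOn k (Iset a)) (hnn : ∀ t ∈ Iset a, 0 ≤ k t) {E : ℝ≥0∞} (hE0 : E ≠ 0)
    (hE : E ≠ ∞)
    (h1 : ∫⁻ t in Iset a, ENNReal.ofReal (k t) ^ p * ENNReal.ofReal (w t) ≤ E) :
    ∫⁻ t in Iset a, rearr (volI a) f t * ENNReal.ofReal (k t)
      ≤ lorentzDualNorm a w p f * E ^ (1/p) := by
  have hF0 : E ^ (1/p) ≠ 0 := by simp [ENNReal.rpow_eq_zero_iff, hE0, hE]
  have hF : E ^ (1/p) ≠ ∞ := ENNReal.rpow_ne_top_of_nonneg (by positivity) hE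
  set c : ℝ := ((E ^ (1/p))⁻¹).toReal with hc
  have hc0 : 0 ≤ c := ENNReal.toReal_nonneg
  have hoc : ENNReal.ofReal c = (E ^ (1/p))⁻¹ := ENNReal.ofReal_toReal (ENNReal.inv_ne_top.2 hF0)
  have hocp : ENNReal.ofReal c ^ p = E⁻¹ := by
    rw [hoc, ENNReal.inv_rpow, ← ENNReal.rpow_mul, one_div_mul_cancel hp.ne', ENNReal.rpow_one]
  have h2 := lower_dir (a := a) (w := w) hp.le hf (h := fun t => c * k t) (hk.const_mul c)
    (fun t ht u hu htu => mul_le_mul_of_nonneg_left (hanti ht hu htu) hc0)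
    (fun t ht => mul_nonneg hc0 (hnn t ht)) (by
      have : ∀ t, ENNReal.ofReal (c * k t) ^ p * ENNReal.ofReal (w t) =
          E⁻¹ * (ENNReal.ofReal (k t) ^ p * ENNReal.ofReal (w t)) := by
        intro t
        rw [ENNReal.ofReal_mul hc0, ENNReal.mul_rpow_of_nonneg _ _ hp.le, hocp, mul_assoc]
      simp only [this]
      rw [lintegral_const_mul' _ _ (ENNReal.inv_ne_top.2 hE0)]
      calc _ ≤ E⁻¹ * E := by gcongr
        _ = 1 := ENNReal.inv_mul_cancel hE0 hE)
  have h3 : ∀ t, rearr (volI a) f t * ENNReal.ofReal (c * k t) =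
      (E ^ (1/p))⁻¹ * (rearr (volI a) f t * ENNReal.ofReal (k t)) := by
    intro t
    rw [ENNReal.ofReal_mul hc0, hoc]; ring
  simp only [h3] at h2
  rw [lintegral_const_mul' _ _ (ENNReal.inv_ne_top.2 hF0)] at h2
  calc _ = (E ^ (1/p)) * ((E ^ (1/p))⁻¹ * ∫⁻ t in Iset a, rearr (volI a) f t * ENNReal.ofReal (k t)) := by
        rw [← mul_assoc, ENNReal.mul_inv_cancel hF0 hF, one_mul]
    _ ≤ (E ^ (1/p)) * lorentzDualNorm a w p f := by gcongr
    _ = _ := mul_comm _ _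

theorem prim_dual {a : ℝ≥0∞} {w : ℝ → ℝ} {p : ℝ} (hp : 0 < p)
    (hw_pos : ∀ x ∈ Iset a, 0 < w x) (hw_meas : Measurable w)
    (hW_fin : ∀ t ∈ Iset a, ∫⁻ s in Set.Ioo 0 t, ENNReal.ofReal (w s) ≠ ∞)
    {f : ℝ → ℝ} (hf : Measurable f) {x : ℝ} (hx : x ∈ Iset a) :
    ∫⁻ t in Ioo 0 x, rearr (volI a) f t ≤
      lorentzDualNorm a w p f * (∫⁻ t in Ioo 0 x, ENNReal.ofReal (w t)) ^ (1/p) := by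
  have hsub := Ioo_sub_Iset hx
  have hres : ∀ F : ℝ → ℝ≥0∞, ∫⁻ t in Iset a, (Ioo 0 x).indicator F t = ∫⁻ t in Ioo 0 x, F t := by
    intro F
    rw [lintegral_indicator measurableSet_Ioo, Measure.restrict_restrict measurableSet_Ioo,
      inter_eq_left.2 hsub]
  have h0 : ∫⁻ t in Ioo 0 x, ENNReal.ofReal (w t) ≠ 0 := by
    rw [← pos_iff_ne_zero, setLIntegral_pos_iff hw_meas.ennreal_ofReal]
    have : (Function.support fun t => ENNReal.ofReal (w t)) ∩ Ioo 0 x = Ioo 0 x := by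
      refine inter_eq_right.2 fun t ht => ?_
      simpa using hw_pos t (hsub ht)
    rw [this]
    simpa using hx.1
  have hk : ∀ t, ENNReal.ofReal ((Ioo 0 x).indicator (fun _ => (1:ℝ)) t) =
      (Ioo 0 x).indicator (fun _ => (1:ℝ≥0∞)) t := by
    intro t
    by_cases ht : t ∈ Ioo 0 x <;> simp [indicator, ht]
  have key := scaled_dual (a := a) (w := w) hp hf (k := (Ioo 0 x).indicator (fun _ => (1:ℝ)))
    (measurable_const.indicator measurableSet_Ioo)
    (fun t ht u hu htu => by
      by_cases h1 : u ∈ Ioo 0 x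
      · have h2 : t ∈ Ioo 0 x := ⟨ht.1, lt_of_le_of_lt htu h1.2⟩
        rw [indicator_of_mem h1, indicator_of_mem h2]
      · rw [indicator_of_notMem h1]
        exact indicator_nonneg (fun _ _ => zero_le_one) _)
    (fun t _ => indicator_nonneg (fun _ _ => zero_le_one) _) h0 (hW_fin x hx) (by
      rw [← hres]
      refine lintegral_mono fun t => ?_
      simp only [hk]
      by_cases ht : t ∈ Ioo 0 x
      · simp [indicator, ht]
      · rw [indicator_of_notMem ht, ENNReal.zero_rpow_of_pos hp, zero_mul]; exact zero_le)
  refine le_trans (le_of_eq ?_) key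
  rw [← hres]
  refine lintegral_congr fun t => ?_
  rw [hk]
  by_cases ht : t ∈ Ioo 0 x <;> simp [indicator, ht]

theorem rearr_fin {a : ℝ≥0∞} {w : ℝ → ℝ} {p : ℝ} (hp : 0 < p)
    (hw_pos : ∀ x ∈ Iset a, 0 < w x) (hw_meas : Measurable w)
    (hW_fin : ∀ t ∈ Iset a, ∫⁻ s in Set.Ioo 0 t, ENNReal.ofReal (w s) ≠ ∞)
    {f : ℝ → ℝ} (hf : Measurable f) (hfin : lorentzDualNorm a w p f ≠ ∞) {x : ℝ} (hx : x ∈ Iset a) :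
    ∫⁻ t in Ioo 0 x, rearr (volI a) f t ≠ ∞ ∧ rearr (volI a) f x ≠ ∞ := by
  have h1 : ∫⁻ t in Ioo 0 x, rearr (volI a) f t ≠ ∞ :=
    ne_top_of_le_ne_top (ENNReal.mul_ne_top hfin
      (ENNReal.rpow_ne_top_of_nonneg (by positivity) (hW_fin x hx)))
      (prim_dual hp hw_pos hw_meas hW_fin hf hx)
  refine ⟨h1, fun h2 => h1 ?_⟩
  have h3 : ∫⁻ t in Ioo 0 x, (∞ : ℝ≥0∞) ≤ ∫⁻ t in Ioo 0 x, rearr (volI a) f t := by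
    refine setLIntegral_mono' measurableSet_Ioo fun t ht => ?_
    rw [← h2]; exact rearrE_anti _ _ ht.2.le
  rw [setLIntegral_const, Real.volume_Ioo, ENNReal.top_mul (by simpa using hx.1)] at h3
  exact top_le_iff.1 h3

theorem core_of {a : ℝ≥0∞} {w : ℝ → ℝ} {p q : ℝ} (hpq : p.HolderConjugate q)
    (hw_pos : ∀ x ∈ Iset a, 0 < w x) (hw_anti : AntitoneOn w (Iset a)) (hw_meas : Measurable w)
    (hW_fin : ∀ t ∈ Iset a, ∫⁻ s in Set.Ioo 0 t, ENNReal.ofReal (w s) ≠ ∞)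
    {f : ℝ → ℝ} (hf : Measurable f) (hfin : lorentzDualNorm a w p f ≠ ∞) :
    Core a (fun t => (rearr (volI a) f t).toReal) w := by
  have hp := hpq.pos
  have hq := hpq.symm.pos
  have hfx := fun x (hx : x ∈ Iset a) => rearr_fin hp hw_pos hw_meas hW_fin hf hfin hx
  have hrm : Measurable (rearr (volI a) f) := (rearrE_anti _ _).measurable
  have hφ : LocW a (fun t => (rearr (volI a) f t).toReal) := by
    refine ⟨fun t ht u hu htu => ?_, fun t _ => ENNReal.toReal_nonneg, fun x hx => ?_⟩
    · exact ENNReal.toReal_mono (hfx t ht).2 (rearrE_anti _ _ htu)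
    · refine integrable_toReal_of_lintegral_ne_top hrm.aemeasurable ?_
      rw [restrict_Ioo_eq_restrict_Ioc.symm]
      exact (hfx x hx).1
  have hw : LocW a w := by
    refine ⟨hw_anti, fun t ht => (hw_pos t ht).le, fun x hx => ?_⟩
    refine ⟨hw_meas.aestronglyMeasurable, ?_⟩
    rw [hasFiniteIntegral_iff_ofReal]
    · rw [restrict_Ioo_eq_restrict_Ioc.symm]
      exact lt_top_iff_ne_top.2 (hW_fin x hx)
    · exact (ae_restrict_iff' measurableSet_Ioc).2 (Eventually.of_forall fun t ht =>
        (hw_pos t (Ioc_sub_Iset le_rfl hx ht)).le)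
  set φ : ℝ → ℝ := fun t => (rearr (volI a) f t).toReal with hφd
  set C : ℝ := (lorentzDualNorm a w p f).toReal with hC
  have hC0 : 0 ≤ C := ENNReal.toReal_nonneg
  have hWp : ∀ x ∈ Iset a, 0 < Prim w x := fun x hx => by
    have := hw.smono hw_pos le_rfl hx.1 hx
    rwa [Prim_zero] at this
  have hP : ∀ x ∈ Iset a, Prim φ x ≤ C * (Prim w x) ^ (1/p) := by
    intro x hx
    have h1 := prim_dual hp hw_pos hw_meas hW_fin hf hx
    have e1 : ∫⁻ t in Ioo 0 x, rearr (volI a) f t = ENNReal.ofReal (Prim φ x) := by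
      have := hφ.meas le_rfl hx.1.le hx
      rw [Prim_zero, sub_zero, wMeas_apply _ _ measurableSet_Ioc (Ioc_sub_Iset le_rfl hx)] at this
      rw [← this, restrict_Ioo_eq_restrict_Ioc]
      refine setLIntegral_congr_fun measurableSet_Ioc fun t ht => ?_
      exact (ENNReal.ofReal_toReal (hfx t (Ioc_sub_Iset le_rfl hx ht)).2).symm
    have e2 : ∫⁻ t in Ioo 0 x, ENNReal.ofReal (w t) = ENNReal.ofReal (Prim w x) := by
      have := hw.meas le_rfl hx.1.le hx
      rw [Prim_zero, sub_zero, wMeas_apply _ _ measurableSet_Ioc (Ioc_sub_Iset le_rfl hx)] at this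
      rw [← this, restrict_Ioo_eq_restrict_Ioc]
    rw [e1, e2, ENNReal.ofReal_rpow_of_pos (hWp x hx), ← ENNReal.ofReal_toReal hfin,
      ← ENNReal.ofReal_mul ENNReal.toReal_nonneg] at h1
    exact (ENNReal.ofReal_le_ofReal_iff (mul_nonneg hC0 (Real.rpow_nonneg (hWp x hx).le _))).1 h1
  have hR : ∀ r y, Rec a φ w r y → r * (Prim w y) ^ (1/q) ≤ C := by
    intro r y hy
    have hyI := hy.1
    have h1 := hy.2 0 le_rfl hyI.1.le
    rw [Prim_zero, Prim_zero] at h1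
    have h2 := hP y hyI
    have hW := hWp y hyI
    have h3 : (Prim w y) ^ (1/q) * (Prim w y) ^ (1/p) = Prim w y := by
      rw [← Real.rpow_add hW, show 1/q + 1/p = 1 by
        have := hpq.inv_add_inv_eq_one; rw [one_div, one_div]; linarith, Real.rpow_one]
    have h4 : 0 < (Prim w y) ^ (1/p) := Real.rpow_pos_of_pos hW _
    refine le_of_mul_le_mul_right ?_ h4
    rw [mul_assoc, h3]; linarith
  refine ⟨hφ, hw, hw_pos, ?_, ?_, ?_⟩
  · intro t ht c hc hct
    have h1 : ENNReal.ofReal c < rearr (volI a) f t :=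
      (ENNReal.ofReal_lt_iff_lt_toReal hc (hfx t ht).2).2 hct
    obtain ⟨t1, ht1, h2⟩ := rearrE_rc ht.1.le h1
    obtain ⟨y, hty, hy⟩ := Iset_above ht
    have hlt : t < min t1 y := lt_min ht1 hty
    have hm : min t1 y ∈ Iset a := Iset_down hy (ht.1.trans hlt) (min_le_right _ _)
    refine ⟨min t1 y, hlt, hm, ?_⟩
    refine (ENNReal.ofReal_lt_iff_lt_toReal hc (hfx _ hm).2).1 (lt_of_lt_of_le h2 ?_)
    exact rearrE_anti _ _ (min_le_left _ _)
  · intro t ht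
    have hW := Real.rpow_pos_of_pos (hWp t ht) (1/q)
    refine ⟨C / (Prim w t) ^ (1/q), fun r y hr hty hy => ?_⟩
    rw [le_div_iff₀ hW]
    refine le_trans (mul_le_mul_of_nonneg_left ?_ hr) (hR r y hy)
    exact Real.rpow_le_rpow (hWp t ht).le (hw.mono ht.1.le hty.le hy.1) (by positivity)
  · intro s hs
    refine ⟨C * ((C / s) ^ q) ^ (1/p), fun y hy => (hP y hy.1).trans ?_⟩
    have hW := hWp y hy.1
    refine mul_le_mul_of_nonneg_left (Real.rpow_le_rpow hW.le ?_ (by positivity)) hC0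
    have h1 : (Prim w y) ^ (1/q) ≤ C / s := by
      rw [le_div_iff₀ hs, mul_comm]; exact hR s y hy
    have h2 := Real.rpow_le_rpow (Real.rpow_nonneg hW.le _) h1 hq.le
    rwa [← Real.rpow_mul hW.le, one_div_mul_cancel hq.ne', Real.rpow_one] at h2

theorem pt_bound {F l v c q : ℝ} (hF : 0 ≤ F) (hl : 0 ≤ l) (hFl : l = 0 → F = 0) (hc : 1 < c)
    (hq : 1 < q) (hv : 0 < v) (hvd : c⁻¹ * (F / l) ≤ v) :
    ENNReal.ofReal F ^ q * ENNReal.ofReal v ^ (1 - q) ≤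
      ENNReal.ofReal c ^ (q - 1) * (ENNReal.ofReal F * ENNReal.ofReal l ^ (q - 1)) := by
  rcases hF.eq_or_lt with rfl | hF0
  · rw [ENNReal.ofReal_zero, ENNReal.zero_rpow_of_pos (by linarith), zero_mul]; exact zero_le
  have hl0 : 0 < l := lt_of_le_of_ne hl fun h => hF0.ne' (hFl h.symm)
  have hc0 : 0 < c := by linarith
  have hd : 0 < c⁻¹ * (F / l) := by positivity
  rw [ENNReal.ofReal_rpow_of_pos hF0, ENNReal.ofReal_rpow_of_pos hv, ENNReal.ofReal_rpow_of_pos hc0,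
    ENNReal.ofReal_rpow_of_pos hl0, ← ENNReal.ofReal_mul (by positivity),
    ← ENNReal.ofReal_mul (by positivity), ← ENNReal.ofReal_mul (by positivity)]
  refine ENNReal.ofReal_le_ofReal ?_
  have h1 : v ^ (1 - q) ≤ (c⁻¹ * (F / l)) ^ (1 - q) :=
    Real.rpow_le_rpow_of_nonpos hd hvd (by linarith)
  refine (mul_le_mul_of_nonneg_left h1 (Real.rpow_nonneg hF _)).trans (le_of_eq ?_)
  have h2 : c⁻¹ * (F / l) = (c * l / F)⁻¹ := by field_simp
  rw [h2, Real.inv_rpow (by positivity), ← Real.rpow_neg (by positivity),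
    show -(1 - q) = q - 1 by ring, Real.div_rpow (by positivity) hF, Real.mul_rpow hc0.le hl]
  have h3 : F ^ q = F ^ (q - 1) * F := by
    rw [← Real.rpow_add_one hF0.ne']; congr 1; ring
  have h4 : 0 < F ^ (q - 1) := Real.rpow_pos_of_pos hF0 _
  rw [h3]
  field_simp

theorem inf_le {a : ℝ≥0∞} {w : ℝ → ℝ} {p q : ℝ} (hpq : p.HolderConjugate q)
    (hw_pos : ∀ x ∈ Iset a, 0 < w x) (hw_anti : AntitoneOn w (Iset a)) (hw_meas : Measurable w)
    (hW_fin : ∀ t ∈ Iset a, ∫⁻ s in Set.Ioo 0 t, ENNReal.ofReal (w s) ≠ ∞)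
    {f : ℝ → ℝ} (hf : Measurable f) (hfin : lorentzDualNorm a w p f ≠ ∞) {c : ℝ} (hc : 1 < c) :
    ∃ v : ℝ → ℝ, (∀ t ∈ Iset a, 0 < v t) ∧ AntitoneOn v (Iset a) ∧
          (∀ x ∈ Iset a,
            ∫⁻ t in Set.Ioo 0 x, ENNReal.ofReal (v t)
              ≤ ∫⁻ t in Set.Ioo 0 x, ENNReal.ofReal (w t)) ∧
          (∫⁻ t in Iset a, rearr (volI a) f t ^ q * ENNReal.ofReal (v t) ^ (1 - q)) ^ (1/q)
            ≤ ENNReal.ofReal c ^ ((q - 1) * (1/q)) * lorentzDualNorm a w p f := by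
  have hq : 1 < q := hpq.symm.lt
  have hq0 : 0 < q := hpq.symm.pos
  have hfx := fun x (hx : x ∈ Iset a) => (rearr_fin hpq.pos hw_pos hw_meas hW_fin hf hfin hx).2
  have h := core_of hpq hw_pos hw_anti hw_meas hW_fin hf hfin
  set φ : ℝ → ℝ := fun t => (rearr (volI a) f t).toReal with hφd
  have hφe : ∀ t ∈ Iset a, rearr (volI a) f t = ENNReal.ofReal (φ t) := fun t ht =>
    (ENNReal.ofReal_toReal (hfx t ht)).symm
  have hc0 : 0 < c := by linarith
  have hc1 : 0 < c⁻¹ := inv_pos.2 hc0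
  have hc2 : 0 < 1 - c⁻¹ := sub_pos.2 (inv_lt_one_of_one_lt₀ hc)
  have hd0 : ∀ t ∈ Iset a, 0 ≤ φ t / lam a φ w t := fun t ht =>
    div_nonneg (h.hφ.nonneg t ht) (h.lam_nonneg ht)
  set v : ℝ → ℝ := fun t => c⁻¹ * (φ t / lam a φ w t) + (1 - c⁻¹) * w t with hv
  have hvp : ∀ t ∈ Iset a, 0 < v t := fun t ht =>
    add_pos_of_nonneg_of_pos (mul_nonneg hc1.le (hd0 t ht)) (mul_pos hc2 (hw_pos t ht))
  refine ⟨v, hvp, ?_, ?_, ?_⟩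
  · intro t ht u hu htu
    exact add_le_add (mul_le_mul_of_nonneg_left (h.v_anti ht hu htu) hc1.le)
      (mul_le_mul_of_nonneg_left (hw_anti ht hu htu) hc2.le)
  · intro x hx
    have e : ∫⁻ t in Ioo 0 x, ENNReal.ofReal (v t) =
        ∫⁻ t in Ioo 0 x, (ENNReal.ofReal c⁻¹ * ENNReal.ofReal (φ t / lam a φ w t) +
          ENNReal.ofReal (1 - c⁻¹) * ENNReal.ofReal (w t)) := by
      refine setLIntegral_congr_fun measurableSet_Ioo fun t ht => ?_
      have htI := Ioo_sub_Iset hx ht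
      simp only [hv]
      rw [ENNReal.ofReal_add (mul_nonneg hc1.le (hd0 t htI)) (mul_pos hc2 (hw_pos t htI)).le,
        ENNReal.ofReal_mul hc1.le, ENNReal.ofReal_mul hc2.le]
    rw [e, lintegral_add_right _ (hw_meas.ennreal_ofReal.const_mul _),
      lintegral_const_mul' _ _ ENNReal.ofReal_ne_top, lintegral_const_mul' _ _ ENNReal.ofReal_ne_top]
    calc _ ≤ ENNReal.ofReal c⁻¹ * (∫⁻ t in Ioo 0 x, ENNReal.ofReal (w t)) +
          ENNReal.ofReal (1 - c⁻¹) * ∫⁻ t in Ioo 0 x, ENNReal.ofReal (w t) := by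
          exact add_le_add_left (mul_le_mul_right (h.submaj hx) _) _
      _ = _ := by
          rw [← add_mul, ← ENNReal.ofReal_add hc1.le hc2.le]
          simp
  · have hJ := h.J_le hpq (M := lorentzDualNorm a w p f) (fun k hk hka hk0 E hE0 hE hle => by
      refine le_trans (le_of_eq ?_) (scaled_dual hpq.pos hf hk hka hk0 hE0 hE hle)
      refine setLIntegral_congr_fun (meas_Iset a) fun t ht => ?_
      simp only [hφe t ht])
    have h1 : ∫⁻ t in Iset a, rearr (volI a) f t ^ q * ENNReal.ofReal (v t) ^ (1 - q) ≤
        ENNReal.ofReal c ^ (q - 1) * lorentzDualNorm a w p f ^ q := by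
      have hcf : ENNReal.ofReal c ^ (q - 1) ≠ ∞ :=
        ENNReal.rpow_ne_top_of_nonneg (by linarith) ENNReal.ofReal_ne_top
      refine le_trans ?_ (mul_le_mul_right hJ (ENNReal.ofReal c ^ (q - 1)))
      rw [← lintegral_const_mul' _ _ hcf]
      refine lintegral_mono_ae ?_
      filter_upwards [h.zero_ae, ae_restrict_mem (meas_Iset a)] with t hz ht
      rw [hφe t ht]
      refine pt_bound (h.hφ.nonneg t ht) (h.lam_nonneg ht) hz hc hq (hvp t ht) ?_
      have := mul_pos hc2 (hw_pos t ht)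
      simp only [hv]; linarith
    refine (ENNReal.rpow_le_rpow h1 (by positivity : 0 ≤ 1/q)).trans (le_of_eq ?_)
    rw [ENNReal.mul_rpow_of_nonneg _ _ (by positivity), ← ENNReal.rpow_mul, ← ENNReal.rpow_mul,
      mul_one_div_cancel hq0.ne', ENNReal.rpow_one]



/-- For `1 < p < ∞`, `1/p + 1/q = 1`, and a non-increasing positive weight `w`
with `W` finite, if `N(f) < ∞` then
`N(f) = inf { (∫_I (f*)^q v^{1−q})^{1/q} : v non-increasing positive, v ≺ w }`. -/
theorem stmt_18 (a : ℝ≥0∞) (ha : 0 < a) (w : ℝ → ℝ)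
    (hw_pos : ∀ x ∈ Iset a, 0 < w x) (hw_anti : AntitoneOn w (Iset a)) (hw_meas : Measurable w)
    (hW_fin : ∀ t ∈ Iset a, ∫⁻ s in Set.Ioo 0 t, ENNReal.ofReal (w s) ≠ ∞)
    (p q : ℝ) (hp : 1 < p) (hpq : 1/p + 1/q = 1)
    (f : ℝ → ℝ) (hf : Measurable f)
    (hfin : lorentzDualNorm a w p f ≠ ∞) :
    lorentzDualNorm a w p f
      = sInf {c : ℝ≥0∞ | ∃ v : ℝ → ℝ, (∀ t ∈ Iset a, 0 < v t) ∧ AntitoneOn v (Iset a) ∧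
          (∀ x ∈ Iset a,
            ∫⁻ t in Set.Ioo 0 x, ENNReal.ofReal (v t)
              ≤ ∫⁻ t in Set.Ioo 0 x, ENNReal.ofReal (w t)) ∧
          c = (∫⁻ t in Iset a,
                rearr (volI a) f t ^ q * ENNReal.ofReal (v t) ^ (1 - q)) ^ (1/q)} := by
  have hpq2 : p.HolderConjugate q := by
    rw [Real.holderConjugate_iff]
    exact ⟨hp, by rw [one_div, one_div] at hpq; exact hpq⟩
  refine le_antisymm ?_ ?_
  · refine sSup_le ?_
    rintro _ ⟨g, hg, hg1, rfl⟩
    refine le_sInf ?_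
    rintro _ ⟨v, hvp, hva, hvw, rfl⟩
    exact upper_dir a hvp (aemeasurable_restrict_of_antitoneOn (meas_Iset a) hva)
      hw_meas.aemeasurable hvw hpq2 hf hg hg1
  · refine le_of_forall_c ((q - 1) * (1/q)) fun c hc => ?_
    obtain ⟨v, hvp, hva, hvw, hle⟩ := inf_le hpq2 hw_pos hw_anti hw_meas hW_fin hf hfin hc
    refine le_trans (sInf_le ?_) hle
    exact ⟨v, hvp, hva, hvw, rfl⟩
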